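/- Let T be a tensorly faithful Wakamatsu tilting (S,R)-bimodule and N a right S-module of finite Gorenstein flat dimension. If either the projective dimension of T as a left S-module is finite, or the injective dimension of T as a left S-module is finite, then N belongs to the Auslander class 𝒜_T(S). -/

import Mathlib

open Function MulOpposite

universe u

noncomputable section

/-! ## Chain conditions -/

/-- A ring is right coherent if every finitely generated right ideal is finitely presented. -/
def IsRightCoherentRing (R : Type u) [Ring R] : Prop :=
  ∀ I : Submodule Rᵐᵒᵖ R, I.FG → Module.FinitePresentation Rᵐᵒᵖ I

/-- A ring is left coherent if every finitely generated left ideal is finitely presented. -/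
def IsLeftCoherentRing (S : Type u) [Ring S] : Prop :=
  ∀ I : Submodule S S, I.FG → Module.FinitePresentation S I

/-- A ring is right Noetherian if every right ideal is finitely generated. -/
def IsRightNoetherianRing (R : Type u) [Ring R] : Prop :=
  ∀ I : Submodule Rᵐᵒᵖ R, I.FG

/-! ## The tensor product `N ⊗_S T` of a right `S`-module `N` with a left `S`-module `T` -/

section MTensor

variable (S : Type u) [Ring S]
variable (N : Type u) [AddCommGroup N] [Module Sᵐᵒᵖ N]
variable (T : Type u) [AddCommGroup T] [Module S T]

/-- The subgroup of balancing relations defining `N ⊗_S T` as a quotient of `T ⊗_ℤ N`. -/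
def mtRel : AddSubgroup (TensorProduct ℤ T N) :=
  AddSubgroup.closure
    {x | ∃ (s : S) (t : T) (n : N), x = (s • t) ⊗ₜ[ℤ] n - t ⊗ₜ[ℤ] (op s • n)}

/-- `MTensor S N T` is the tensor product `N ⊗_S T` of a right `S`-module `N` with a left
`S`-module `T`, realized as a quotient of `T ⊗_ℤ N`. -/
def MTensor : Type u := TensorProduct ℤ T N ⧸ mtRel S N T

instance : AddCommGroup (MTensor S N T) :=
  inferInstanceAs (AddCommGroup (TensorProduct ℤ T N ⧸ mtRel S N T))

variable {S N T}

/-- `MTensor.mk n t` is the element `n ⊗ t` of `N ⊗_S T`. -/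
def MTensor.mk (n : N) (t : T) : MTensor S N T := QuotientAddGroup.mk (t ⊗ₜ[ℤ] n)

section Map

variable {N' : Type u} [AddCommGroup N'] [Module Sᵐᵒᵖ N']

/-- Functoriality of `N ⊗_S T` in the right `S`-module variable `N`. -/
def MTensor.map (g : N →ₗ[Sᵐᵒᵖ] N') : MTensor S N T →+ MTensor S N' T :=
  QuotientAddGroup.map _ _
    (LinearMap.lTensor T g.toAddMonoidHom.toIntLinearMap).toAddMonoidHom
    (by
      refine (AddSubgroup.closure_le _).2 ?_
      rintro x ⟨s, t, n, rfl⟩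
      simp only [SetLike.mem_coe, AddSubgroup.mem_comap, LinearMap.toAddMonoidHom_coe,
        map_sub, LinearMap.lTensor_tmul, AddMonoidHom.coe_toIntLinearMap,
        LinearMap.toAddMonoidHom_coe, map_smul]
      exact AddSubgroup.subset_closure ⟨s, t, g n, rfl⟩)

end Map

section LMap

variable {T' : Type u} [AddCommGroup T'] [Module S T']

/-- Functoriality of `N ⊗_S T` in the left `S`-module variable `T`. -/
def MTensor.lmap (h : T →ₗ[S] T') : MTensor S N T →+ MTensor S N T' :=
  QuotientAddGroup.map _ _
    (LinearMap.rTensor N h.toAddMonoidHom.toIntLinearMap).toAddMonoidHom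
    (by
      refine (AddSubgroup.closure_le _).2 ?_
      rintro x ⟨s, t, n, rfl⟩
      simp only [SetLike.mem_coe, AddSubgroup.mem_comap, LinearMap.toAddMonoidHom_coe,
        map_sub, LinearMap.rTensor_tmul, AddMonoidHom.coe_toIntLinearMap, map_smul]
      exact AddSubgroup.subset_closure ⟨s, h t, n, rfl⟩)

end LMap

section Bimod

variable (R : Type u) [Ring R] [Module Rᵐᵒᵖ T] [SMulCommClass S Rᵐᵒᵖ T]

instance MTensor.instSMul : SMul Rᵐᵒᵖ (MTensor S N T) :=
  ⟨fun ρ =>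
    QuotientAddGroup.map _ _ (DistribMulAction.toAddMonoidHom (TensorProduct ℤ T N) ρ)
      (by
        refine (AddSubgroup.closure_le _).2 ?_
        rintro x ⟨s, t, n, rfl⟩
        simp only [SetLike.mem_coe, AddSubgroup.mem_comap,
          DistribMulAction.toAddMonoidHom_apply, smul_sub, TensorProduct.smul_tmul']
        exact AddSubgroup.subset_closure ⟨s, ρ • t, n, by rw [smul_comm s ρ t]⟩)⟩

instance MTensor.instModule : Module Rᵐᵒᵖ (MTensor S N T) :=
  Function.Surjective.module Rᵐᵒᵖ (QuotientAddGroup.mk' (mtRel S N T))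
    (QuotientAddGroup.mk'_surjective _) (fun _ _ => rfl)

theorem MTensor.smul_mk (ρ : Rᵐᵒᵖ) (n : N) (t : T) :
    ρ • (MTensor.mk n t : MTensor S N T) = MTensor.mk n (ρ • t) := by
  show QuotientAddGroup.mk (ρ • (t ⊗ₜ[ℤ] n)) = QuotientAddGroup.mk ((ρ • t) ⊗ₜ[ℤ] n)
  rw [TensorProduct.smul_tmul']

theorem MTensor.mk_add_right (n : N) (t t' : T) :
    (MTensor.mk n (t + t') : MTensor S N T) = MTensor.mk n t + MTensor.mk n t' := by
  show QuotientAddGroup.mk _ = _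
  rw [TensorProduct.add_tmul]
  rfl

/-- The natural map `θ_N : N → Hom_R(T, N ⊗_S T)`, `n ↦ (t ↦ n ⊗ t)`. -/
def MTensor.theta (n : N) : T →ₗ[Rᵐᵒᵖ] MTensor S N T where
  toFun t := MTensor.mk n t
  map_add' t t' := MTensor.mk_add_right n t t'
  map_smul' ρ t := (MTensor.smul_mk R ρ n t).symm

variable (S T N) in
/-- The natural map `θ_N : N → Hom_R(T, N ⊗_S T)` as a function. -/
def MTensor.thetaFun : N → (T →ₗ[Rᵐᵒᵖ] MTensor S N T) := fun n => MTensor.theta R n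

end Bimod

end MTensor

/-! ## The right `S`-module structure on `Hom_A(T, M)` induced by a left `S`-action on `T` -/

section HomModule

variable {B A : Type u} [Ring B] [Ring A]
variable {T : Type u} [AddCommGroup T] [Module A T] [Module B T] [SMulCommClass B A T]
variable {M : Type u} [AddCommGroup M] [Module A M]

instance homDomSMul : SMul Bᵐᵒᵖ (T →ₗ[A] M) :=
  ⟨fun b f =>
    { toFun := fun t => f (b.unop • t)
      map_add' := fun t t' => by
        show f (b.unop • (t + t')) = f (b.unop • t) + f (b.unop • t')
        rw [smul_add, map_add]
      map_smul' := fun a t => by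
        show f (b.unop • a • t) = a • f (b.unop • t)
        rw [smul_comm b.unop a t, map_smul] }⟩

@[simp] theorem homDomSMul_apply (b : Bᵐᵒᵖ) (f : T →ₗ[A] M) (t : T) :
    (b • f) t = f (b.unop • t) := rfl

instance homDomModule : Module Bᵐᵒᵖ (T →ₗ[A] M) where
  one_smul f := LinearMap.ext fun t => by simp
  mul_smul b b' f := LinearMap.ext fun t => by simp [mul_smul]
  smul_zero b := LinearMap.ext fun t => rfl
  smul_add b f g := LinearMap.ext fun t => rfl
  add_smul b b' f := LinearMap.ext fun t => by simp [add_smul]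
  zero_smul f := LinearMap.ext fun t => by simp

end HomModule

/-! ## The evaluation map `ν_M : Hom_R(T, M) ⊗_S T → M` -/

section Nu

variable (S R : Type u) [Ring S] [Ring R]
variable (T : Type u) [AddCommGroup T] [Module S T] [Module Rᵐᵒᵖ T] [SMulCommClass S Rᵐᵒᵖ T]
variable (M : Type u) [AddCommGroup M] [Module Rᵐᵒᵖ M]

/-- The evaluation map `ν_M : Hom_R(T, M) ⊗_S T → M`, `f ⊗ t ↦ f t`. -/
def MTensor.nuFun : MTensor S (T →ₗ[Rᵐᵒᵖ] M) T →+ M :=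
  QuotientAddGroup.lift _
    (TensorProduct.liftAddHom
      { toFun := fun t =>
          { toFun := fun f : T →ₗ[Rᵐᵒᵖ] M => f t
            map_zero' := rfl
            map_add' := fun f g => rfl }
        map_zero' := AddMonoidHom.ext fun f => f.map_zero
        map_add' := fun t t' => AddMonoidHom.ext fun f => f.map_add t t' }
      (fun z t f => by
        show f (z • t) = (z • f) t
        rw [map_zsmul, LinearMap.smul_apply]))
    (by
      refine (AddSubgroup.closure_le _).2 ?_
      rintro x ⟨s, t, f, rfl⟩
      simp only [SetLike.mem_coe, AddMonoidHom.mem_ker, map_sub,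
        TensorProduct.liftAddHom_tmul, AddMonoidHom.coe_mk, ZeroHom.coe_mk]
      show f (s • t) - (op s • f) t = 0
      rw [homDomSMul_apply]
      simp)

end Nu


/-! ## Resolutions and derived-functor vanishing -/

/-- The data of a nonnegatively graded chain complex `⋯ → P 1 → P 0 → X` of `A`-modules. -/
structure ResolutionData (A : Type u) [Ring A] (X : Type u) [AddCommGroup X] [Module A X] :
    Type (u + 1) where
  P : ℕ → Type u
  [instAdd : ∀ n, AddCommGroup (P n)]
  [instMod : ∀ n, Module A (P n)]
  d : ∀ n, P (n + 1) →ₗ[A] P n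
  ε : P 0 →ₗ[A] X

attribute [instance] ResolutionData.instAdd ResolutionData.instMod

/-- The property of being a projective resolution. -/
structure ResolutionData.IsProjResolution {A : Type u} [Ring A] {X : Type u} [AddCommGroup X]
    [Module A X] (Q : ResolutionData A X) : Prop where
  proj : ∀ n, Module.Projective A (Q.P n)
  surj : Function.Surjective Q.ε
  exact0 : Function.Exact (Q.d 0) Q.ε
  exactSucc : ∀ n, Function.Exact (Q.d (n + 1)) (Q.d n)

/-- `X` has a resolution by finitely generated projective `A`-modules. -/
def HasFGProjResolution (A : Type u) [Ring A] (X : Type u) [AddCommGroup X] [Module A X] : Prop :=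
  ∃ Q : ResolutionData A X, Q.IsProjResolution ∧ ∀ n, Module.Finite A (Q.P n)

/-- `Ext^i_A(X, Y) = 0` for all `i ≥ 1`: some (equivalently, any) projective resolution of `X`
has `Hom_A(-, Y)`-complex exact at all positive degrees. -/
def ExtVanishAll (A : Type u) [Ring A] (X Y : Type u) [AddCommGroup X] [Module A X]
    [AddCommGroup Y] [Module A Y] : Prop :=
  ∃ Q : ResolutionData A X, Q.IsProjResolution ∧
    ∀ j : ℕ, Function.Exact
      (fun f : Q.P j →ₗ[A] Y => f.comp (Q.d j))
      (fun f : Q.P (j + 1) →ₗ[A] Y => f.comp (Q.d (j + 1)))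

/-- `Ext^1_A(X, Y) = 0`: every short exact sequence `0 → Y → E → X → 0` splits. -/
def Ext1Vanishes (A : Type u) [Ring A] (X Y : Type u) [AddCommGroup X] [Module A X]
    [AddCommGroup Y] [Module A Y] : Prop :=
  ∀ (E : Type u) [AddCommGroup E] [Module A E] (i : Y →ₗ[A] E) (p : E →ₗ[A] X),
    Function.Injective i → Function.Surjective p → Function.Exact i p →
      ∃ s : X →ₗ[A] E, p.comp s = LinearMap.id

/-- `Tor^S_i(N, T) = 0` for all `i ≥ 1`: some (equivalently, any) projective resolution of the
right `S`-module `N` stays exact in positive degrees after applying `- ⊗_S T`. -/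
def TorVanishAll (S : Type u) [Ring S] (N : Type u) [AddCommGroup N] [Module Sᵐᵒᵖ N]
    (T : Type u) [AddCommGroup T] [Module S T] : Prop :=
  ∃ Q : ResolutionData Sᵐᵒᵖ N, Q.IsProjResolution ∧
    ∀ j : ℕ, Function.Exact
      (⇑(MTensor.map (T := T) (Q.d (j + 1))))
      (⇑(MTensor.map (T := T) (Q.d j)))

/-! ## Homological dimensions -/

/-- A surjection onto `M` from some module. -/
structure EpiOnto (A : Type u) [Ring A] (M : ModuleCat.{u} A) : Type (u + 1) where
  P : ModuleCat.{u} A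
  f : P →ₗ[A] M
  surj : Function.Surjective f

/-- An injection of `M` into some module. -/
structure MonoInto (A : Type u) [Ring A] (M : ModuleCat.{u} A) : Type (u + 1) where
  E : ModuleCat.{u} A
  f : M →ₗ[A] E
  inj : Function.Injective f

/-- `HasClassResolution A 𝒞 n M` says that there is an exact sequence
`0 → C_n → ⋯ → C_0 → M → 0` with all `C_i` in the class `𝒞`. -/
def HasClassResolution (A : Type u) [Ring A] (C : ModuleCat.{u} A → Prop) :
    ℕ → ModuleCat.{u} A → Prop
  | 0, M => C M
  | n + 1, M => ∃ e : EpiOnto A M, C e.P ∧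
      HasClassResolution A C n (ModuleCat.of A (LinearMap.ker e.f))

/-- `HasClassCoresolution A 𝒞 n M` says that there is an exact sequence
`0 → M → C^0 → ⋯ → C^n → 0` with all `C^i` in the class `𝒞`. -/
def HasClassCoresolution (A : Type u) [Ring A] (C : ModuleCat.{u} A → Prop) :
    ℕ → ModuleCat.{u} A → Prop
  | 0, M => C M
  | n + 1, M => ∃ m : MonoInto A M, C m.E ∧
      HasClassCoresolution A C n (ModuleCat.of A ((↥m.E) ⧸ LinearMap.range m.f))

/-- The projective dimension of `M` is at most `n`. -/
def ProjDimLE (A : Type u) [Ring A] (M : Type u) [AddCommGroup M] [Module A M] (n : ℕ) : Prop :=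
  HasClassResolution A (fun P => Module.Projective A P) n (ModuleCat.of A M)

/-- The injective dimension of `M` is at most `n`. -/
def InjDimLE (A : Type u) [Ring A] (M : Type u) [AddCommGroup M] [Module A M] (n : ℕ) : Prop :=
  HasClassCoresolution A (fun E => Module.Injective A E) n (ModuleCat.of A M)

/-- A right `S`-module `N` is flat if `N ⊗_S -` preserves injections of left `S`-modules. -/
def IsFlatRightModule (S : Type u) [Ring S] (N : Type u) [AddCommGroup N] [Module Sᵐᵒᵖ N] :
    Prop :=
  ∀ (X Y : Type u) [AddCommGroup X] [Module S X] [AddCommGroup Y] [Module S Y]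
    (g : X →ₗ[S] Y), Function.Injective g →
      Function.Injective (MTensor.lmap (N := N) g)

/-- The flat dimension of the right `S`-module `N` is at most `n`. -/
def FlatDimLE (S : Type u) [Ring S] (N : Type u) [AddCommGroup N] [Module Sᵐᵒᵖ N] (n : ℕ) :
    Prop :=
  HasClassResolution Sᵐᵒᵖ (fun P => IsFlatRightModule S P) n (ModuleCat.of Sᵐᵒᵖ N)

/-! ## Gorenstein homological algebra -/

/-- The data of a `ℤ`-indexed complex of `A`-modules. -/
structure ZComplex (A : Type u) [Ring A] : Type (u + 1) where
  P : ℤ → Type u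
  [instAdd : ∀ i, AddCommGroup (P i)]
  [instMod : ∀ i, Module A (P i)]
  d : ∀ i, P i →ₗ[A] P (i + 1)

attribute [instance] ZComplex.instAdd ZComplex.instMod

/-- Exactness of a `ℤ`-indexed complex. -/
def ZComplex.IsExact {A : Type u} [Ring A] (C : ZComplex A) : Prop :=
  ∀ i, Function.Exact (C.d i) (C.d (i + 1))

/-- A module is Gorenstein projective if it is a kernel of a totally acyclic complex of
projective modules. -/
def IsGorensteinProjective (A : Type u) [Ring A] (N : Type u) [AddCommGroup N] [Module A N] :
    Prop :=
  ∃ C : ZComplex A, (∀ i, Module.Projective A (C.P i)) ∧ C.IsExact ∧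
    (∀ (Q : Type u) [AddCommGroup Q] [Module A Q], Module.Projective A Q →
      ∀ i, Function.Exact
        (fun f : C.P (i + 1 + 1) →ₗ[A] Q => f.comp (C.d (i + 1)))
        (fun f : C.P (i + 1) →ₗ[A] Q => f.comp (C.d i))) ∧
    Nonempty (N ≃ₗ[A] LinearMap.ker (C.d 0))

/-- A module is Gorenstein injective if it is a kernel of a totally acyclic complex of
injective modules. -/
def IsGorensteinInjective (A : Type u) [Ring A] (M : Type u) [AddCommGroup M] [Module A M] :
    Prop :=
  ∃ C : ZComplex A, (∀ i, Module.Injective A (C.P i)) ∧ C.IsExact ∧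
    (∀ (I : Type u) [AddCommGroup I] [Module A I], Module.Injective A I →
      ∀ i, Function.Exact
        (fun f : I →ₗ[A] C.P i => (C.d i).comp f)
        (fun f : I →ₗ[A] C.P (i + 1) => (C.d (i + 1)).comp f)) ∧
    Nonempty (M ≃ₗ[A] LinearMap.ker (C.d 0))

/-- A right `S`-module is Gorenstein flat if it is a kernel of a complex of flat right
`S`-modules which stays exact after tensoring with any injective left `S`-module. -/
def IsGorensteinFlat (S : Type u) [Ring S] (N : Type u) [AddCommGroup N] [Module Sᵐᵒᵖ N] :
    Prop :=
  ∃ C : ZComplex Sᵐᵒᵖ, (∀ i, IsFlatRightModule S (C.P i)) ∧ C.IsExact ∧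
    (∀ (I : Type u) [AddCommGroup I] [Module S I], Module.Injective S I →
      ∀ i, Function.Exact
        (⇑(MTensor.map (T := I) (C.d i)))
        (⇑(MTensor.map (T := I) (C.d (i + 1))))) ∧
    Nonempty (N ≃ₗ[Sᵐᵒᵖ] LinearMap.ker (C.d 0))

/-- The Gorenstein projective dimension of `N` is at most `n`. -/
def GpdLE (A : Type u) [Ring A] (N : Type u) [AddCommGroup N] [Module A N] (n : ℕ) : Prop :=
  HasClassResolution A (fun P => IsGorensteinProjective A P) n (ModuleCat.of A N)

/-- The Gorenstein flat dimension of the right `S`-module `N` is at most `n`. -/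
def GfdLE (S : Type u) [Ring S] (N : Type u) [AddCommGroup N] [Module Sᵐᵒᵖ N] (n : ℕ) : Prop :=
  HasClassResolution Sᵐᵒᵖ (fun P => IsGorensteinFlat S P) n (ModuleCat.of Sᵐᵒᵖ N)

/-- The Gorenstein injective dimension of `M` is at most `n`. -/
def GidLE (A : Type u) [Ring A] (M : Type u) [AddCommGroup M] [Module A M] (n : ℕ) : Prop :=
  HasClassCoresolution A (fun E => IsGorensteinInjective A E) n (ModuleCat.of A M)

/-! ## Module classes `Prod(C)`, `Add(C)`, `add(C)` and (co)generators -/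

/-- `M` is a retract (equivalently, a direct summand up to isomorphism) of `P`. -/
def IsRetractOf (A : Type u) [Ring A] (M P : Type u) [AddCommGroup M] [Module A M]
    [AddCommGroup P] [Module A P] : Prop :=
  ∃ (f : M →ₗ[A] P) (g : P →ₗ[A] M), g.comp f = LinearMap.id

/-- `Prod(C)`: direct summands of direct products of copies of `C`. -/
def InProdClass (A : Type u) [Ring A] (C : Type u) [AddCommGroup C] [Module A C]
    (M : ModuleCat.{u} A) : Prop :=
  ∃ I : Type u, IsRetractOf A M (I → C)

/-- `Add(C)`: direct summands of direct sums of copies of `C`. -/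
def InAddClass (A : Type u) [Ring A] (C : Type u) [AddCommGroup C] [Module A C]
    (M : ModuleCat.{u} A) : Prop :=
  ∃ I : Type u, IsRetractOf A M (I →₀ C)

/-- `add(C)`: direct summands of finite direct sums of copies of `C`. -/
def InFinAddClass (A : Type u) [Ring A] (C : Type u) [AddCommGroup C] [Module A C]
    (M : ModuleCat.{u} A) : Prop :=
  ∃ k : ℕ, IsRetractOf A M (Fin k → C)

/-- `Q` is an injective cogenerator: `Q` is injective and every module embeds into a direct
product of copies of `Q`. -/
def IsInjectiveCogenerator (A : Type u) [Ring A] (Q : Type u) [AddCommGroup Q] [Module A Q] :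
    Prop :=
  Module.Injective A Q ∧
    ∀ (M : Type u) [AddCommGroup M] [Module A M],
      ∃ (I : Type u) (f : M →ₗ[A] (I → Q)), Function.Injective f

/-- `E` is the minimal injective cogenerator: it is an injective cogenerator which is a direct
summand of every injective cogenerator. -/
def IsMinimalInjectiveCogenerator (A : Type u) [Ring A] (E : Type u) [AddCommGroup E]
    [Module A E] : Prop :=
  IsInjectiveCogenerator A E ∧
    ∀ (Q : Type u) [AddCommGroup Q] [Module A Q],
      IsInjectiveCogenerator A Q → IsRetractOf A E Q

/-! ## Bimodules, homotheties, Wakamatsu tilting bimodules -/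

section Bimodules

variable (S R : Type u) [Ring S] [Ring R]
variable (T : Type u) [AddCommGroup T] [Module S T] [Module Rᵐᵒᵖ T] [SMulCommClass S Rᵐᵒᵖ T]

/-- The natural map `S → End(T_R)` given by the left `S`-action. -/
def leftHomothety : S → (T →ₗ[Rᵐᵒᵖ] T) := fun s =>
  { toFun := fun t => s • t
    map_add' := fun t t' => smul_add s t t'
    map_smul' := fun ρ t => smul_comm s ρ t }

/-- The natural map `R → End(_S T)` given by the right `R`-action. -/
def rightHomothety : R → (T →ₗ[S] T) := fun r =>
  { toFun := fun t => op r • t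
    map_add' := fun t t' => smul_add (op r) t t'
    map_smul' := fun s t => (smul_comm s (op r) t).symm }

/-- A Wakamatsu tilting `(S, R)`-bimodule: `T` admits resolutions by finitely generated
projectives on both sides, the natural maps `S → End(T_R)` and `R → End(_S T)` are
isomorphisms, and `Ext^i(T, T) = 0` on both sides for all `i ≥ 1`. -/
structure IsWakamatsuTilting : Prop where
  fgProjResR : HasFGProjResolution Rᵐᵒᵖ T
  fgProjResS : HasFGProjResolution S T
  bijS : Function.Bijective (leftHomothety S R T)
  bijR : Function.Bijective (rightHomothety S R T)
  extR : ExtVanishAll Rᵐᵒᵖ T T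
  extS : ExtVanishAll S T T

/-- An `(S, R)`-bimodule `T` is tensorly faithful if `T ⊗_R M = 0` implies `M = 0` and
`N ⊗_S T = 0` implies `N = 0`. -/
def IsTensorlyFaithful : Prop :=
  (∀ (M : Type u) [AddCommGroup M] [Module R M],
      Subsingleton (MTensor R T M) → Subsingleton M) ∧
  (∀ (N : Type u) [AddCommGroup N] [Module Sᵐᵒᵖ N],
      Subsingleton (MTensor S N T) → Subsingleton N)

/-- Membership in the Auslander class `𝒜_T(S)`. -/
structure InAuslanderClass (N : Type u) [AddCommGroup N] [Module Sᵐᵒᵖ N] : Prop where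
  torVanish : TorVanishAll S N T
  extVanish : ExtVanishAll Rᵐᵒᵖ T (MTensor S N T)
  thetaBij : Function.Bijective (MTensor.thetaFun S N T R)

/-- Membership in the Bass class `ℬ_T(R)`. -/
structure InBassClass (M : Type u) [AddCommGroup M] [Module Rᵐᵒᵖ M] : Prop where
  extVanish : ExtVanishAll Rᵐᵒᵖ T M
  torVanish : TorVanishAll S (T →ₗ[Rᵐᵒᵖ] M) T
  nuBij : Function.Bijective (MTensor.nuFun S R T M)

end Bimodules

/-! ## Cotilting and tilting modules -/

/-- A cotilting right `R`-module (Hügel–Coelho): finite injective dimension,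
`Ext^{i≥1}_R(Cᴵ, C) = 0` for every index set `I`, and there is a finite exact sequence
`0 → C_r → ⋯ → C_0 → Q → 0` with all `C_i ∈ Prod(C)` and `Q` an injective cogenerator. -/
structure IsCotilting (R : Type u) [Ring R] (C : Type u) [AddCommGroup C] [Module Rᵐᵒᵖ C] :
    Prop where
  finInjDim : ∃ n, InjDimLE Rᵐᵒᵖ C n
  extProdVanish : ∀ I : Type u, ExtVanishAll Rᵐᵒᵖ (I → C) C
  coresolution : ∃ (Q : ModuleCat.{u} Rᵐᵒᵖ) (r : ℕ),
    IsInjectiveCogenerator Rᵐᵒᵖ Q ∧ HasClassResolution Rᵐᵒᵖ (InProdClass Rᵐᵒᵖ C) r Q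

/-- An `n`-tilting right `R`-module (Miyashita). -/
structure IsNTilting (R : Type u) [Ring R] (T : Type u) [AddCommGroup T] [Module Rᵐᵒᵖ T]
    (n : ℕ) : Prop where
  fgProjRes : HasFGProjResolution Rᵐᵒᵖ T
  projDim : ProjDimLE Rᵐᵒᵖ T n
  extVanish : ExtVanishAll Rᵐᵒᵖ T T
  coresolution : HasClassCoresolution Rᵐᵒᵖ (InFinAddClass Rᵐᵒᵖ T) n (ModuleCat.of Rᵐᵒᵖ R)

/-- The data of a coresolution `0 → R → P 0 → P 1 → ⋯` of right `R`-modules. -/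
structure WakamatsuCoresolutionData (R : Type u) [Ring R] : Type (u + 1) where
  P : ℕ → Type u
  [instAdd : ∀ n, AddCommGroup (P n)]
  [instMod : ∀ n, Module Rᵐᵒᵖ (P n)]
  f0 : R →ₗ[Rᵐᵒᵖ] P 0
  d : ∀ n, P n →ₗ[Rᵐᵒᵖ] P (n + 1)

attribute [instance] WakamatsuCoresolutionData.instAdd WakamatsuCoresolutionData.instMod

/-- A Wakamatsu tilting right `R`-module: it admits a resolution by finitely generated
projective right `R`-modules, `Ext^{i≥1}_R(T, T) = 0`, and there is an exact sequence
`0 → R → T^0 → T^1 → ⋯` with each `T^i ∈ add(T)` and `Ext^1_R(Coker f, T) = 0` for every map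
`f` in this sequence. -/
def IsWakamatsuTiltingModule (R : Type u) [Ring R] (T : Type u) [AddCommGroup T]
    [Module Rᵐᵒᵖ T] : Prop :=
  HasFGProjResolution Rᵐᵒᵖ T ∧ ExtVanishAll Rᵐᵒᵖ T T ∧
    ∃ W : WakamatsuCoresolutionData R,
      Function.Injective W.f0 ∧ Function.Exact W.f0 (W.d 0) ∧
      (∀ n, Function.Exact (W.d n) (W.d (n + 1))) ∧
      (∀ n, InFinAddClass Rᵐᵒᵖ T (ModuleCat.of Rᵐᵒᵖ (W.P n))) ∧
      Ext1Vanishes Rᵐᵒᵖ ((W.P 0) ⧸ LinearMap.range W.f0) T ∧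
      (∀ n, Ext1Vanishes Rᵐᵒᵖ ((W.P (n + 1)) ⧸ LinearMap.range (W.d n)) T)

namespace MTensor

section Basic

variable {S : Type u} [Ring S]
variable {N : Type u} [AddCommGroup N] [Module Sᵐᵒᵖ N]
variable {T : Type u} [AddCommGroup T] [Module S T]

theorem mk_add_left (n n' : N) (t : T) :
    (mk (n + n') t : MTensor S N T) = mk n t + mk n' t := by
  change QuotientAddGroup.mk _ = _
  rw [TensorProduct.tmul_add]
  rfl

theorem mk_smul (s : S) (n : N) (t : T) :
    (mk n (s • t) : MTensor S N T) = mk (op s • n) t :=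
  QuotientAddGroup.eq_iff_sub_mem.2 (AddSubgroup.subset_closure ⟨s, t, n, rfl⟩)

@[elab_as_elim]
theorem induction_on {p : MTensor S N T → Prop} (x : MTensor S N T) (zero : p 0)
    (mk : ∀ n t, p (mk n t)) (add : ∀ x y, p x → p y → p (x + y)) : p x := by
  obtain ⟨x, rfl⟩ := QuotientAddGroup.mk_surjective x
  induction x with
  | zero => exact zero
  | tmul t n => exact mk n t
  | add x y hx hy => exact add _ _ hx hy

variable (S N T) in
/-- The biadditive map `(n, t) ↦ n ⊗ t`. -/
def mkHom : N →+ T →+ MTensor S N T :=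
  AddMonoidHom.mk' (fun n => AddMonoidHom.mk' (mk n) (mk_add_right n))
    fun n n' => AddMonoidHom.ext (mk_add_left n n')

@[simp] theorem mk_zero_left (t : T) : (mk 0 t : MTensor S N T) = 0 :=
  DFunLike.congr_fun (map_zero (mkHom S N T)) t

@[simp] theorem mk_zero_right (n : N) : (mk n 0 : MTensor S N T) = 0 :=
  map_zero (mkHom S N T n)

theorem mk_sum_left {ι : Type*} (s : Finset ι) (n : ι → N) (t : T) :
    (mk (∑ i ∈ s, n i) t : MTensor S N T) = ∑ i ∈ s, mk (n i) t :=
  map_sum ((mkHom S N T).flip t) n s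

theorem mk_sum_right {ι : Type*} (s : Finset ι) (n : N) (t : ι → T) :
    (mk n (∑ i ∈ s, t i) : MTensor S N T) = ∑ i ∈ s, mk n (t i) :=
  map_sum (mkHom S N T n) t s

section Lift

variable {A : Type*} [AddCommGroup A]

/-- A balanced biadditive map induces a homomorphism on `N ⊗_S T`. -/
def lift (f : N →+ T →+ A) (hf : ∀ (s : S) n t, f n (s • t) = f (op s • n) t) :
    MTensor S N T →+ A :=
  QuotientAddGroup.lift _
    (TensorProduct.liftAddHom f.flip fun z t n => by simp)
    (by
      refine (AddSubgroup.closure_le _).2 ?_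
      rintro x ⟨s, t, n, rfl⟩
      simp [AddMonoidHom.mem_ker, hf])

@[simp] theorem lift_mk (f : N →+ T →+ A)
    (hf : ∀ (s : S) n t, f n (s • t) = f (op s • n) t) (n : N) (t : T) :
    lift f hf (mk n t : MTensor S N T) = f n t := rfl

theorem hom_ext {f g : MTensor S N T →+ A} (h : ∀ n t, f (mk n t) = g (mk n t)) : f = g := by
  ext x
  induction x using induction_on with
  | zero => simp
  | mk n t => exact h n t
  | add x y hx hy => simp [hx, hy]

end Lift

variable {N' : Type u} [AddCommGroup N'] [Module Sᵐᵒᵖ N']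
variable {N'' : Type u} [AddCommGroup N''] [Module Sᵐᵒᵖ N'']
variable {T' : Type u} [AddCommGroup T'] [Module S T']
variable {T'' : Type u} [AddCommGroup T''] [Module S T'']

@[simp] theorem map_mk (g : N →ₗ[Sᵐᵒᵖ] N') (n : N) (t : T) :
    map g (mk n t : MTensor S N T) = mk (g n) t := rfl

@[simp] theorem lmap_mk (h : T →ₗ[S] T') (n : N) (t : T) :
    lmap h (mk n t : MTensor S N T) = mk n (h t) := rfl

theorem map_map (g : N →ₗ[Sᵐᵒᵖ] N') (g' : N' →ₗ[Sᵐᵒᵖ] N'') (x : MTensor S N T) :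
    map g' (map g x) = map (g'.comp g) x := by
  induction x using induction_on with
  | zero => simp only [map_zero]
  | mk n t => rfl
  | add x y hx hy => simp only [map_add, hx, hy]

theorem lmap_lmap (h : T →ₗ[S] T') (h' : T' →ₗ[S] T'') (x : MTensor S N T) :
    lmap h' (lmap h x) = lmap (h'.comp h) x := by
  induction x using induction_on with
  | zero => simp only [map_zero]
  | mk n t => rfl
  | add x y hx hy => simp only [map_add, hx, hy]

theorem lmap_map (g : N →ₗ[Sᵐᵒᵖ] N') (h : T →ₗ[S] T') (x : MTensor S N T) :
    lmap h (map g x) = map g (lmap h x) := by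
  induction x using induction_on with
  | zero => simp only [map_zero]
  | mk n t => rfl
  | add x y hx hy => simp only [map_add, hx, hy]

@[simp] theorem map_zero_apply (x : MTensor S N T) : map (0 : N →ₗ[Sᵐᵒᵖ] N') x = 0 :=
  DFunLike.congr_fun (hom_ext (f := map (0 : N →ₗ[Sᵐᵒᵖ] N')) (g := 0)
    fun _ t => mk_zero_left t) x

@[simp] theorem lmap_zero_apply (x : MTensor S N T) : lmap (0 : T →ₗ[S] T') x = 0 :=
  DFunLike.congr_fun (hom_ext (f := lmap (0 : T →ₗ[S] T')) (g := 0)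
    fun n _ => mk_zero_right n) x

theorem map_surjective {g : N →ₗ[Sᵐᵒᵖ] N'} (hg : Surjective g) :
    Surjective (map (T := T) g) := fun y => by
  induction y using induction_on with
  | zero => exact ⟨0, map_zero _⟩
  | mk n t => obtain ⟨n, rfl⟩ := hg n; exact ⟨mk n t, rfl⟩
  | add x y hx hy =>
    obtain ⟨x, rfl⟩ := hx
    obtain ⟨y, rfl⟩ := hy
    exact ⟨x + y, map_add _ _ _⟩

theorem lmap_surjective {h : T →ₗ[S] T'} (hh : Surjective h) :
    Surjective (lmap (N := N) h) := fun y => by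
  induction y using induction_on with
  | zero => exact ⟨0, map_zero _⟩
  | mk n t => obtain ⟨t, rfl⟩ := hh t; exact ⟨mk n t, rfl⟩
  | add x y hx hy =>
    obtain ⟨x, rfl⟩ := hx
    obtain ⟨y, rfl⟩ := hy
    exact ⟨x + y, map_add _ _ _⟩

theorem map_exact {f : N →ₗ[Sᵐᵒᵖ] N'} {g : N' →ₗ[Sᵐᵒᵖ] N''} (hfg : Exact f g)
    (hg : Surjective g) : Exact (map (T := T) f) (map (T := T) g) := by
  have hrel : ∀ z ∈ mtRel S N'' T, ∃ y ∈ mtRel S N' T,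
      LinearMap.lTensor T g.toAddMonoidHom.toIntLinearMap y = z := fun z hz => by
    induction hz using AddSubgroup.closure_induction with
    | mem z hz =>
      obtain ⟨s, t, n, rfl⟩ := hz
      obtain ⟨n, rfl⟩ := hg n
      exact ⟨_, AddSubgroup.subset_closure ⟨s, t, n, rfl⟩, by simp⟩
    | zero => exact ⟨0, zero_mem _, map_zero _⟩
    | add x y _ _ hx hy =>
      obtain ⟨x, hx, rfl⟩ := hx
      obtain ⟨y, hy, rfl⟩ := hy
      exact ⟨_, add_mem hx hy, map_add _ _ _⟩
    | neg x _ hx =>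
      obtain ⟨x, hx, rfl⟩ := hx
      exact ⟨_, neg_mem hx, map_neg _ _⟩
  refine fun x => ⟨fun hx => ?_, ?_⟩
  · obtain ⟨x, rfl⟩ := QuotientAddGroup.mk_surjective x
    obtain ⟨y, hy, hyx⟩ := hrel _ ((QuotientAddGroup.eq_zero_iff _).1 hx)
    have hex : Exact (LinearMap.lTensor T f.toAddMonoidHom.toIntLinearMap)
        (LinearMap.lTensor T g.toAddMonoidHom.toIntLinearMap) := lTensor_exact T hfg hg
    obtain ⟨w, hw⟩ := (hex (x - y)).1 (by rw [map_sub, hyx]; exact sub_self _)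
    refine ⟨QuotientAddGroup.mk w, ?_⟩
    change QuotientAddGroup.mk (LinearMap.lTensor T f.toAddMonoidHom.toIntLinearMap w) = _
    rw [hw]
    exact QuotientAddGroup.eq_iff_sub_mem.2 (by simpa using hy)
  · rintro ⟨w, rfl⟩
    rw [map_map, hfg.linearMap_comp_eq_zero, map_zero_apply]

theorem lmap_exact {f : T →ₗ[S] T'} {g : T' →ₗ[S] T''} (hfg : Exact f g)
    (hg : Surjective g) : Exact (lmap (N := N) f) (lmap (N := N) g) := by
  have hrel : ∀ z ∈ mtRel S N T'', ∃ y ∈ mtRel S N T',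
      LinearMap.rTensor N g.toAddMonoidHom.toIntLinearMap y = z := fun z hz => by
    induction hz using AddSubgroup.closure_induction with
    | mem z hz =>
      obtain ⟨s, t, n, rfl⟩ := hz
      obtain ⟨t, rfl⟩ := hg t
      exact ⟨_, AddSubgroup.subset_closure ⟨s, t, n, rfl⟩, by simp⟩
    | zero => exact ⟨0, zero_mem _, map_zero _⟩
    | add x y _ _ hx hy =>
      obtain ⟨x, hx, rfl⟩ := hx
      obtain ⟨y, hy, rfl⟩ := hy
      exact ⟨_, add_mem hx hy, map_add _ _ _⟩
    | neg x _ hx =>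
      obtain ⟨x, hx, rfl⟩ := hx
      exact ⟨_, neg_mem hx, map_neg _ _⟩
  refine fun x => ⟨fun hx => ?_, ?_⟩
  · obtain ⟨x, rfl⟩ := QuotientAddGroup.mk_surjective x
    obtain ⟨y, hy, hyx⟩ := hrel _ ((QuotientAddGroup.eq_zero_iff _).1 hx)
    have hex : Exact (LinearMap.rTensor N f.toAddMonoidHom.toIntLinearMap)
        (LinearMap.rTensor N g.toAddMonoidHom.toIntLinearMap) := rTensor_exact N hfg hg
    obtain ⟨w, hw⟩ := (hex (x - y)).1 (by rw [map_sub, hyx]; exact sub_self _)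
    refine ⟨QuotientAddGroup.mk w, ?_⟩
    change QuotientAddGroup.mk (LinearMap.rTensor N f.toAddMonoidHom.toIntLinearMap w) = _
    rw [hw]
    exact QuotientAddGroup.eq_iff_sub_mem.2 (by simpa using hy)
  · rintro ⟨w, rfl⟩
    rw [lmap_lmap, hfg.linearMap_comp_eq_zero, lmap_zero_apply]

end Basic

end MTensor

section Flat

variable {S : Type u} [Ring S]

/-- Tensoring with a flat right module preserves exactness. -/
theorem IsFlatRightModule.lmap_exact {N : Type u} [AddCommGroup N] [Module Sᵐᵒᵖ N]
    (hN : IsFlatRightModule S N) {X Y Z : Type u} [AddCommGroup X] [Module S X]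
    [AddCommGroup Y] [Module S Y] [AddCommGroup Z] [Module S Z]
    {f : X →ₗ[S] Y} {g : Y →ₗ[S] Z} (hfg : Exact f g) :
    Exact (MTensor.lmap (N := N) f) (MTensor.lmap (N := N) g) := by
  have hr : Exact f g.rangeRestrict := fun x => by
    rw [← hfg x, Subtype.ext_iff]; rfl
  have hex := MTensor.lmap_exact (N := N) hr g.surjective_rangeRestrict
  intro x
  rw [← hex x, ← (hN _ _ _ (LinearMap.range g).subtype_injective).eq_iff, map_zero,
    MTensor.lmap_lmap]
  rfl

/-- A left `S`-module `P` is flat if `- ⊗_S P` preserves injections of right `S`-modules. -/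
def IsFlatLeftModule (S : Type u) [Ring S] (P : Type u) [AddCommGroup P] [Module S P] : Prop :=
  ∀ (X Y : Type u) [AddCommGroup X] [Module Sᵐᵒᵖ X] [AddCommGroup Y] [Module Sᵐᵒᵖ Y]
    (g : X →ₗ[Sᵐᵒᵖ] Y), Injective g → Injective (MTensor.map (T := P) g)

theorem IsFlatLeftModule.map_exact {P : Type u} [AddCommGroup P] [Module S P]
    (hP : IsFlatLeftModule S P) {X Y Z : Type u} [AddCommGroup X] [Module Sᵐᵒᵖ X]
    [AddCommGroup Y] [Module Sᵐᵒᵖ Y] [AddCommGroup Z] [Module Sᵐᵒᵖ Z]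
    {f : X →ₗ[Sᵐᵒᵖ] Y} {g : Y →ₗ[Sᵐᵒᵖ] Z} (hfg : Exact f g) :
    Exact (MTensor.map (T := P) f) (MTensor.map (T := P) g) := by
  have hr : Exact f g.rangeRestrict := fun x => by
    rw [← hfg x, Subtype.ext_iff]; rfl
  have hex := MTensor.map_exact (T := P) hr g.surjective_rangeRestrict
  intro x
  rw [← hex x, ← (hP _ _ _ (LinearMap.range g).subtype_injective).eq_iff, map_zero,
    MTensor.map_map]
  rfl

theorem IsFlatLeftModule.of_projective (P : Type u) [AddCommGroup P] [Module S P]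
    [Module.Projective S P] : IsFlatLeftModule S P := by
  obtain ⟨s, hs⟩ := Module.projective_def'.1 ‹Module.Projective S P›
  intro X Y _ _ _ _ g hg
  let act (M : Type u) [AddCommGroup M] [Module Sᵐᵒᵖ M] : M →+ S →+ M :=
    AddMonoidHom.mk' (fun m => AddMonoidHom.mk' (fun a => op a • m) fun a b => by
      rw [op_add, add_smul]) fun m m' => AddMonoidHom.ext fun a => smul_add _ _ _
  let coord (M : Type u) [AddCommGroup M] [Module Sᵐᵒᵖ M] : MTensor S M P →+ (P →₀ M) :=
    MTensor.lift (AddMonoidHom.mk'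
      (fun m => (Finsupp.mapRange.addMonoidHom (act M m)).comp s.toAddMonoidHom)
      fun m m' => by ext p q; simp)
      fun a m p => by
        ext q
        simp [act, mul_smul]
  have hinv : ∀ x : MTensor S X P,
      Finsupp.liftAddHom (fun p => (MTensor.mkHom S X P).flip p) (coord X x) = x := by
    refine fun x => DFunLike.congr_fun (MTensor.hom_ext (g := AddMonoidHom.id _)
      (f := (Finsupp.liftAddHom fun p => (MTensor.mkHom S X P).flip p).comp (coord X))
      fun m p => ?_) x
    have hp : (s p).sum (fun q a => a • q) = p := LinearMap.congr_fun hs p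
    simp only [AddMonoidHom.comp_apply, coord, MTensor.lift_mk, AddMonoidHom.id_apply,
      AddMonoidHom.mk'_apply, Finsupp.mapRange.addMonoidHom_apply, Finsupp.liftAddHom_apply]
    rw [Finsupp.sum_mapRange_index (by simp)]
    conv_rhs => rw [← hp, Finsupp.sum, MTensor.mk_sum_right]
    exact Finset.sum_congr rfl fun q _ => (MTensor.mk_smul _ _ _).symm
  have hnat : ∀ x : MTensor S X P, coord Y (MTensor.map g x) =
      Finsupp.mapRange g (map_zero g) (coord X x) := by
    refine fun x => DFunLike.congr_fun (MTensor.hom_ext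
      (f := (coord Y).comp (MTensor.map g))
      (g := (Finsupp.mapRange.addMonoidHom g.toAddMonoidHom).comp (coord X)) fun m p => ?_) x
    ext q
    simp [coord, act]
  intro x y hxy
  rw [← hinv x, ← hinv y, Finsupp.mapRange_injective g (map_zero g) hg
    ((hnat x).symm.trans ((congrArg _ hxy).trans (hnat y)))]

end Flat

section FlatRight

variable {S : Type u} [Ring S]

theorem IsFlatRightModule.of_projective (P : Type u) [AddCommGroup P] [Module Sᵐᵒᵖ P]
    [Module.Projective Sᵐᵒᵖ P] : IsFlatRightModule S P := by
  obtain ⟨s, hs⟩ := Module.projective_def'.1 ‹Module.Projective Sᵐᵒᵖ P›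
  intro X Y _ _ _ _ g hg
  let act (M : Type u) [AddCommGroup M] [Module S M] : M →+ Sᵐᵒᵖ →+ M :=
    AddMonoidHom.mk' (fun m => AddMonoidHom.mk' (fun a => unop a • m) fun a b => by
      rw [unop_add, add_smul]) fun m m' => AddMonoidHom.ext fun a => smul_add _ _ _
  let coord (M : Type u) [AddCommGroup M] [Module S M] : MTensor S P M →+ (P →₀ M) :=
    MTensor.lift (AddMonoidHom.mk'
      (fun m => (Finsupp.mapRange.addMonoidHom (act M m)).comp s.toAddMonoidHom)
      fun m m' => by ext p q; simp).flip
      fun a p m => by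
        ext q
        simp [act, mul_smul]
  have hinv : ∀ x : MTensor S P X,
      Finsupp.liftAddHom (fun p => MTensor.mkHom S P X p) (coord X x) = x := by
    refine fun x => DFunLike.congr_fun (MTensor.hom_ext (g := AddMonoidHom.id _)
      (f := (Finsupp.liftAddHom fun p => MTensor.mkHom S P X p).comp (coord X))
      fun p m => ?_) x
    have hp : (s p).sum (fun q a => a • q) = p := LinearMap.congr_fun hs p
    simp only [AddMonoidHom.comp_apply, coord, MTensor.lift_mk, AddMonoidHom.id_apply,
      AddMonoidHom.mk'_apply, Finsupp.mapRange.addMonoidHom_apply, Finsupp.liftAddHom_apply,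
      AddMonoidHom.flip_apply]
    rw [Finsupp.sum_mapRange_index (by simp)]
    conv_rhs => rw [← hp, Finsupp.sum, MTensor.mk_sum_left]
    exact Finset.sum_congr rfl fun q _ => MTensor.mk_smul _ _ _
  have hnat : ∀ x : MTensor S P X, coord Y (MTensor.lmap g x) =
      Finsupp.mapRange g (map_zero g) (coord X x) := by
    refine fun x => DFunLike.congr_fun (MTensor.hom_ext
      (f := (coord Y).comp (MTensor.lmap g))
      (g := (Finsupp.mapRange.addMonoidHom g.toAddMonoidHom).comp (coord X)) fun p m => ?_) x
    ext q
    simp [coord, act]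
  intro x y hxy
  rw [← hinv x, ← hinv y, Finsupp.mapRange_injective g (map_zero g) hg
    ((hnat x).symm.trans ((congrArg _ hxy).trans (hnat y)))]

end FlatRight

section Chase

variable {A₁ A₂ A₃ B₀ B₁ B₂ B₃ C₀ C₁ C₂ : Type*}
  [AddCommGroup A₁] [AddCommGroup A₂] [AddCommGroup A₃]
  [AddCommGroup B₀] [AddCommGroup B₁] [AddCommGroup B₂] [AddCommGroup B₃]
  [AddCommGroup C₀] [AddCommGroup C₁] [AddCommGroup C₂]
  {a₁ : A₁ →+ A₂} {a₂ : A₂ →+ A₃} {b₀ : B₀ →+ B₁} {b₁ : B₁ →+ B₂} {b₂ : B₂ →+ B₃}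
  {c₀ : C₀ →+ C₁} {c₁ : C₁ →+ C₂}
  {f₁ : A₁ →+ B₁} {f₂ : A₂ →+ B₂} {f₃ : A₃ →+ B₃}
  {g₀ : B₀ →+ C₀} {g₁ : B₁ →+ C₁} {g₂ : B₂ →+ C₂}

/-- In a short exact sequence of complexes, exactness of the first two passes to the third. -/
theorem exact_third_column (ha : Exact a₁ a₂) (hb : Exact b₀ b₁) (hb' : ∀ x, b₂ (b₁ x) = 0)
    (hc : ∀ x, c₁ (c₀ x) = 0)
    (hf₂ : ∀ x, f₂ (a₁ x) = b₁ (f₁ x)) (hf₃ : ∀ x, f₃ (a₂ x) = b₂ (f₂ x))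
    (hg₁ : ∀ x, g₁ (b₀ x) = c₀ (g₀ x)) (hg₂ : ∀ x, g₂ (b₁ x) = c₁ (g₁ x))
    (h₁ : ∀ x, g₁ (f₁ x) = 0) (h₁' : Surjective g₁) (h₂ : Exact f₂ g₂) (h₃ : Injective f₃) :
    Exact c₀ c₁ := by
  refine fun c => ⟨fun h => ?_, ?_⟩
  · obtain ⟨b, rfl⟩ := h₁' c
    obtain ⟨a, ha₂⟩ := (h₂ (b₁ b)).1 (by rw [hg₂, h])
    obtain ⟨a', rfl⟩ := (ha a).1 (h₃ (by rw [hf₃, ha₂, hb', map_zero]))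
    obtain ⟨b', hb₀⟩ := (hb (b - f₁ a')).1 (by rw [map_sub, ← hf₂, ha₂, sub_self])
    exact ⟨g₀ b', by rw [← hg₁, hb₀, map_sub, h₁, sub_zero]⟩
  · rintro ⟨x, rfl⟩
    exact hc x

/-- In a short exact sequence of complexes, exactness of the last two passes to the first. -/
theorem exact_first_column (hb : Exact b₁ b₂) (hb' : ∀ x, b₁ (b₀ x) = 0) (hc : Exact c₀ c₁)
    (ha : ∀ x, a₂ (a₁ x) = 0)
    (hf₂ : ∀ x, f₂ (a₁ x) = b₁ (f₁ x)) (hf₃ : ∀ x, f₃ (a₂ x) = b₂ (f₂ x))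
    (hg₁ : ∀ x, g₁ (b₀ x) = c₀ (g₀ x)) (hg₂ : ∀ x, g₂ (b₁ x) = c₁ (g₁ x))
    (h₀ : Surjective g₀) (h₁ : Exact f₁ g₁) (h₂ : Injective f₂) (h₂' : ∀ x, g₂ (f₂ x) = 0) :
    Exact a₁ a₂ := by
  refine fun x => ⟨fun h => ?_, ?_⟩
  · obtain ⟨y, hy⟩ := (hb (f₂ x)).1 (by rw [← hf₃, h, map_zero])
    obtain ⟨z, hz⟩ := (hc (g₁ y)).1 (by rw [← hg₂, hy, h₂'])
    obtain ⟨w, rfl⟩ := h₀ z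
    obtain ⟨v, hv⟩ := (h₁ (y - b₀ w)).1 (by rw [map_sub, hg₁, hz, sub_self])
    exact ⟨v, h₂ (by rw [hf₂, hv, map_sub, hb', sub_zero, hy])⟩
  · rintro ⟨x, rfl⟩
    exact ha x

end Chase

section Ext

variable {A : Type u} [Ring A]

/-- Precomposition as an additive map. -/
def preComp {P P' : Type u} [AddCommGroup P] [Module A P] [AddCommGroup P'] [Module A P']
    (f : P →ₗ[A] P') (Y : Type u) [AddCommGroup Y] [Module A Y] : (P' →ₗ[A] Y) →+ (P →ₗ[A] Y) :=
  AddMonoidHom.mk' (fun h => h.comp f) fun h h' => LinearMap.add_comp f h' h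

/-- Postcomposition as an additive map. -/
def postComp (P : Type u) [AddCommGroup P] [Module A P] {Y Z : Type u} [AddCommGroup Y]
    [Module A Y] [AddCommGroup Z] [Module A Z] (g : Y →ₗ[A] Z) : (P →ₗ[A] Y) →+ (P →ₗ[A] Z) :=
  AddMonoidHom.mk' (fun h => g.comp h) fun h h' => LinearMap.comp_add h h' g

@[simp] theorem preComp_apply {P P' : Type u} [AddCommGroup P] [Module A P] [AddCommGroup P']
    [Module A P'] (f : P →ₗ[A] P') {Y : Type u} [AddCommGroup Y] [Module A Y] (h : P' →ₗ[A] Y) :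
    preComp f Y h = h.comp f := rfl

@[simp] theorem postComp_apply {P : Type u} [AddCommGroup P] [Module A P] {Y Z : Type u}
    [AddCommGroup Y] [Module A Y] [AddCommGroup Z] [Module A Z] (g : Y →ₗ[A] Z)
    (h : P →ₗ[A] Y) : postComp P g h = g.comp h := rfl

section LeftExact

variable {P Y Z W : Type u} [AddCommGroup P] [Module A P] [AddCommGroup Y] [Module A Y]
  [AddCommGroup Z] [Module A Z] [AddCommGroup W] [Module A W]

theorem postComp_injective {f : Y →ₗ[A] Z} (hf : Injective f) : Injective (postComp P f) :=
  fun _ _ h => LinearMap.ext fun x => hf (LinearMap.congr_fun h x)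

theorem postComp_exact {f : Y →ₗ[A] Z} {g : Z →ₗ[A] W} (hf : Injective f) (hfg : Exact f g) :
    Exact (postComp P f) (postComp P g) := by
  refine fun h => ⟨fun hh => ?_, ?_⟩
  · have hr : ∀ x, h x ∈ LinearMap.range f := fun x => (hfg _).1 (LinearMap.congr_fun hh x)
    refine ⟨(LinearEquiv.ofInjective f hf).symm.toLinearMap.comp (h.codRestrict _ hr),
      LinearMap.ext fun x => ?_⟩
    exact congrArg Subtype.val ((LinearEquiv.ofInjective f hf).apply_symm_apply ⟨h x, hr x⟩)
  · rintro ⟨h, rfl⟩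
    exact LinearMap.ext fun x => hfg.apply_apply_eq_zero (h x)

theorem postComp_surjective [Module.Projective A P] {g : Y →ₗ[A] Z} (hg : Surjective g) :
    Surjective (postComp P g) :=
  fun h => Module.projective_lifting_property g h hg

theorem preComp_injective {f : P →ₗ[A] Z} (hf : Surjective f) : Injective (preComp f Y) :=
  fun _ _ h => LinearMap.ext fun z => by
    obtain ⟨x, rfl⟩ := hf z
    exact LinearMap.congr_fun h x

theorem preComp_exact {f : W →ₗ[A] P} {g : P →ₗ[A] Z} (hfg : Exact f g) (hg : Surjective g) :
    Exact (preComp g Y) (preComp f Y) := by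
  refine fun h => ⟨fun hh => ?_, ?_⟩
  · have hk : LinearMap.ker g ≤ LinearMap.ker h := fun x hx => by
      obtain ⟨w, rfl⟩ := (hfg x).1 hx
      exact LinearMap.congr_fun hh w
    refine ⟨((LinearMap.ker g).liftQ h hk).comp (g.quotKerEquivOfSurjective hg).symm.toLinearMap,
      LinearMap.ext fun x => ?_⟩
    have hx : (g.quotKerEquivOfSurjective hg).symm (g x) = Submodule.Quotient.mk x :=
      (LinearEquiv.symm_apply_eq _).2 rfl
    simp [hx]
  · rintro ⟨h, rfl⟩
    exact LinearMap.ext fun x => by simp [hfg.apply_apply_eq_zero x]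

theorem preComp_exact_of_injective [Module.Injective A Y] {f : W →ₗ[A] P} {g : P →ₗ[A] Z}
    (hfg : Exact f g) : Exact (preComp g Y) (preComp f Y) := by
  refine fun h => ⟨fun hh => ?_, ?_⟩
  · have hr : Exact f g.rangeRestrict := fun x => by
      rw [← hfg x, Subtype.ext_iff]; rfl
    obtain ⟨k, hk⟩ := (preComp_exact (Y := Y) hr g.surjective_rangeRestrict h).1 hh
    obtain ⟨l, hl⟩ := Module.Injective.out (LinearMap.range g).subtype
      (LinearMap.range g).subtype_injective k
    exact ⟨l, LinearMap.ext fun x => (hl (g.rangeRestrict x)).trans (LinearMap.congr_fun hk x)⟩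
  · rintro ⟨h, rfl⟩
    exact LinearMap.ext fun x => by simp [hfg.apply_apply_eq_zero x]

end LeftExact

namespace ResolutionData

variable {X : Type u} [AddCommGroup X] [Module A X]

/-- `Ext^{j+1}_A(X, Y) = 0`, computed by the resolution `Q` of `X`. -/
def ExtVanishAt (Q : ResolutionData A X) (Y : Type u) [AddCommGroup Y] [Module A Y] (j : ℕ) :
    Prop :=
  Exact (preComp (Q.d j) Y) (preComp (Q.d (j + 1)) Y)

variable {Q : ResolutionData A X} (hQ : Q.IsProjResolution)
include hQ

theorem IsProjResolution.d_comp_d (j : ℕ) : (Q.d j).comp (Q.d (j + 1)) = 0 :=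
  (hQ.exactSucc j).linearMap_comp_eq_zero

theorem IsProjResolution.ε_comp_d : Q.ε.comp (Q.d 0) = 0 :=
  hQ.exact0.linearMap_comp_eq_zero

theorem IsProjResolution.extVanishAt_of_injective (Y : Type u) [AddCommGroup Y] [Module A Y]
    [Module.Injective A Y] (j : ℕ) : Q.ExtVanishAt Y j :=
  preComp_exact_of_injective (hQ.exactSucc j)

variable {Y Z W : Type u} [AddCommGroup Y] [Module A Y]
  [AddCommGroup Z] [Module A Z] [AddCommGroup W] [Module A W]
  {f : Y →ₗ[A] Z} {g : Z →ₗ[A] W} (hf : Injective f) (hfg : Exact f g) (hg : Surjective g)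
include hf hfg hg

theorem IsProjResolution.extVanishAt_third {j : ℕ} (hZ : Q.ExtVanishAt Z j)
    (hY : Q.ExtVanishAt Y (j + 1)) : Q.ExtVanishAt W j := by
  have := hQ.proj
  exact exact_third_column (f₁ := postComp (Q.P (j + 1)) f) (f₂ := postComp (Q.P (j + 2)) f)
    (f₃ := postComp (Q.P (j + 3)) f) (g₀ := postComp (Q.P j) g) (g₁ := postComp (Q.P (j + 1)) g)
    (g₂ := postComp (Q.P (j + 2)) g) (b₂ := preComp (Q.d (j + 2)) Z) hY hZ
    (fun x => by simp [LinearMap.comp_assoc, hQ.d_comp_d])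
    (fun x => by simp [LinearMap.comp_assoc, hQ.d_comp_d])
    (fun _ => rfl) (fun _ => rfl) (fun _ => rfl) (fun _ => rfl)
    (postComp_exact hf hfg).apply_apply_eq_zero (postComp_surjective hg)
    (postComp_exact hf hfg) (postComp_injective hf)

theorem IsProjResolution.extVanishAt_first {j : ℕ} (hZ : Q.ExtVanishAt Z (j + 1))
    (hW : Q.ExtVanishAt W j) : Q.ExtVanishAt Y (j + 1) := by
  have := hQ.proj
  exact exact_first_column (f₁ := postComp (Q.P (j + 1)) f) (f₂ := postComp (Q.P (j + 2)) f)
    (f₃ := postComp (Q.P (j + 3)) f) (g₀ := postComp (Q.P j) g) (g₁ := postComp (Q.P (j + 1)) g)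
    (g₂ := postComp (Q.P (j + 2)) g) (b₀ := preComp (Q.d j) Z) hZ
    (fun x => by simp [LinearMap.comp_assoc, hQ.d_comp_d]) hW
    (fun x => by simp [LinearMap.comp_assoc, hQ.d_comp_d])
    (fun _ => rfl) (fun _ => rfl) (fun _ => rfl) (fun _ => rfl)
    (postComp_surjective hg) (postComp_exact hf hfg) (postComp_injective hf)
    (postComp_exact hf hfg).apply_apply_eq_zero

omit hg in
theorem IsProjResolution.extVanishAt_zero_first (hZ : Q.ExtVanishAt Z 0)
    (hs : Surjective (postComp X g)) : Q.ExtVanishAt Y 0 := by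
  have := hQ.proj
  exact exact_first_column (f₁ := postComp (Q.P 0) f) (f₂ := postComp (Q.P 1) f)
    (f₃ := postComp (Q.P 2) f) (g₀ := postComp X g) (g₁ := postComp (Q.P 0) g)
    (g₂ := postComp (Q.P 1) g) (b₀ := preComp Q.ε Z) hZ
    (fun x => by simp [LinearMap.comp_assoc, hQ.ε_comp_d])
    (preComp_exact hQ.exact0 hQ.surj)
    (fun x => by simp [LinearMap.comp_assoc, hQ.d_comp_d])
    (fun _ => rfl) (fun _ => rfl) (fun _ => rfl) (fun _ => rfl)
    hs (postComp_exact hf hfg) (postComp_injective hf)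
    (postComp_exact hf hfg).apply_apply_eq_zero

theorem IsProjResolution.postComp_surjective (hY : Q.ExtVanishAt Y 0) :
    Surjective (postComp X g) := by
  have := hQ.proj
  have hex : Exact ((preComp Q.ε W).comp (postComp X g)) (preComp (Q.d 0) W) :=
    exact_third_column (f₁ := postComp (Q.P 0) f) (f₂ := postComp (Q.P 1) f)
      (f₃ := postComp (Q.P 2) f) (g₀ := AddMonoidHom.id _) (g₁ := postComp (Q.P 0) g)
      (g₂ := postComp (Q.P 1) g) (b₀ := preComp Q.ε Z)
      (b₂ := preComp (Q.d 1) Z) hY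
      (preComp_exact hQ.exact0 hQ.surj)
      (fun x => by simp [LinearMap.comp_assoc, hQ.d_comp_d])
      (fun x => by simp [LinearMap.comp_assoc, hQ.ε_comp_d])
      (fun _ => rfl) (fun _ => rfl) (fun _ => rfl) (fun _ => rfl)
      (postComp_exact hf hfg).apply_apply_eq_zero (_root_.postComp_surjective hg)
      (postComp_exact hf hfg) (postComp_injective hf)
  intro h
  obtain ⟨k, hk⟩ := (hex (preComp Q.ε W h)).1
    ((preComp_exact hQ.exact0 hQ.surj).apply_apply_eq_zero h)
  exact ⟨k, preComp_injective hQ.surj hk⟩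

end ResolutionData

theorem exists_injective_embedding (Y : Type u) [AddCommGroup Y] [Module A Y] :
    ∃ (I : Type u) (_ : AddCommGroup I) (_ : Module A I) (f : Y →ₗ[A] I),
      Module.Injective A I ∧ Injective f := by
  let J := CategoryTheory.Injective.under (ModuleCat.of A Y)
  refine ⟨J, inferInstance, inferInstance, (CategoryTheory.Injective.ι (ModuleCat.of A Y)).hom,
    ?_, (ModuleCat.mono_iff_injective _).1 inferInstance⟩
  have : CategoryTheory.Injective (ModuleCat.of A J) :=
    inferInstanceAs (CategoryTheory.Injective J)
  exact Module.injective_module_of_injective_object A J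

/-- The vanishing of `Ext^{j+1}` does not depend on the projective resolution. -/
theorem ResolutionData.IsProjResolution.extVanishAt_congr {X : Type u} [AddCommGroup X]
    [Module A X] {Q Q' : ResolutionData A X} (hQ : Q.IsProjResolution)
    (hQ' : Q'.IsProjResolution) (j : ℕ) :
    ∀ (Y : Type u) [AddCommGroup Y] [Module A Y], Q.ExtVanishAt Y j → Q'.ExtVanishAt Y j := by
  induction j with
  | zero =>
    intro Y _ _ h
    obtain ⟨I, _, _, f, _, hf⟩ := exists_injective_embedding (A := A) Y
    have hfg := LinearMap.exact_map_mkQ_range f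
    have hg := (LinearMap.range f).mkQ_surjective
    exact hQ'.extVanishAt_zero_first hf hfg (hQ'.extVanishAt_of_injective I 0)
      (hQ.postComp_surjective hf hfg hg h)
  | succ j ih =>
    intro Y _ _ h
    obtain ⟨I, _, _, f, _, hf⟩ := exists_injective_embedding (A := A) Y
    have hfg := LinearMap.exact_map_mkQ_range f
    have hg := (LinearMap.range f).mkQ_surjective
    exact hQ'.extVanishAt_first hf hfg hg (hQ'.extVanishAt_of_injective I (j + 1))
      (ih _ (hQ.extVanishAt_third hf hfg hg (hQ.extVanishAt_of_injective I j) h))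

end Ext

section Tor

variable {S : Type u} [Ring S] {T : Type u} [AddCommGroup T] [Module S T]

/-- `Tor^S_{j+1}(N, T) = 0`, computed by the resolution `F` of `T`. -/
def ResolutionData.TorVanishAt (F : ResolutionData S T) (N : Type u) [AddCommGroup N]
    [Module Sᵐᵒᵖ N] (j : ℕ) : Prop :=
  Exact (MTensor.lmap (N := N) (F.d (j + 1))) (MTensor.lmap (N := N) (F.d j))

theorem IsFlatRightModule.torVanishAt {N : Type u} [AddCommGroup N] [Module Sᵐᵒᵖ N]
    (hN : IsFlatRightModule S N) {F : ResolutionData S T} (hF : F.IsProjResolution) (j : ℕ) :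
    F.TorVanishAt N j :=
  hN.lmap_exact (hF.exactSucc j)

namespace ResolutionData.IsProjResolution

variable {F : ResolutionData S T} (hF : F.IsProjResolution)
include hF

theorem flat (j : ℕ) : IsFlatLeftModule S (F.P j) :=
  have := hF.proj j
  .of_projective _

theorem lmap_d_lmap_d {N : Type u} [AddCommGroup N] [Module Sᵐᵒᵖ N] (j : ℕ)
    (x : MTensor S N (F.P (j + 2))) :
    MTensor.lmap (F.d j) (MTensor.lmap (F.d (j + 1)) x) = 0 := by
  rw [MTensor.lmap_lmap, hF.d_comp_d, MTensor.lmap_zero_apply]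

variable {X Y Z : Type u} [AddCommGroup X] [Module Sᵐᵒᵖ X] [AddCommGroup Y] [Module Sᵐᵒᵖ Y]
  [AddCommGroup Z] [Module Sᵐᵒᵖ Z] {f : X →ₗ[Sᵐᵒᵖ] Y} {g : Y →ₗ[Sᵐᵒᵖ] Z}
  (hf : Injective f) (hfg : Exact f g) (hg : Surjective g)
include hf hfg hg

theorem torVanishAt_third {j : ℕ} (hY : F.TorVanishAt Y (j + 1)) (hX : F.TorVanishAt X j) :
    F.TorVanishAt Z (j + 1) :=
  exact_third_column (f₁ := MTensor.map f) (f₂ := MTensor.map f)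
    (f₃ := MTensor.map f) (g₀ := MTensor.map g) (g₁ := MTensor.map g)
    (g₂ := MTensor.map g) (b₂ := MTensor.lmap (F.d j)) hX hY
    (hF.lmap_d_lmap_d j) (hF.lmap_d_lmap_d (j + 1))
    (fun _ => (MTensor.lmap_map _ _ _).symm) (fun _ => (MTensor.lmap_map _ _ _).symm)
    (fun _ => (MTensor.lmap_map _ _ _).symm) (fun _ => (MTensor.lmap_map _ _ _).symm)
    (MTensor.map_exact hfg hg).apply_apply_eq_zero (MTensor.map_surjective hg)
    (MTensor.map_exact hfg hg) (hF.flat j _ _ _ hf)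

theorem torVanishAt_first {j : ℕ} (hY : F.TorVanishAt Y j) (hZ : F.TorVanishAt Z (j + 1)) :
    F.TorVanishAt X j :=
  exact_first_column (f₁ := MTensor.map f) (f₂ := MTensor.map f)
    (f₃ := MTensor.map f) (g₀ := MTensor.map g) (g₁ := MTensor.map g)
    (g₂ := MTensor.map g) (b₀ := MTensor.lmap (F.d (j + 2))) hY
    (hF.lmap_d_lmap_d (j + 1)) hZ (hF.lmap_d_lmap_d j)
    (fun _ => (MTensor.lmap_map _ _ _).symm) (fun _ => (MTensor.lmap_map _ _ _).symm)
    (fun _ => (MTensor.lmap_map _ _ _).symm) (fun _ => (MTensor.lmap_map _ _ _).symm)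
    (MTensor.map_surjective hg) (MTensor.map_exact hfg hg) (hF.flat (j + 1) _ _ _ hf)
    (MTensor.map_exact hfg hg).apply_apply_eq_zero

omit hf in
theorem torVanishAt_zero_third (hY : F.TorVanishAt Y 0)
    (hT : Injective (MTensor.map (T := T) f)) : F.TorVanishAt Z 0 :=
  exact_third_column (f₁ := MTensor.map f) (f₂ := MTensor.map f)
    (f₃ := MTensor.map f) (g₀ := MTensor.map g) (g₁ := MTensor.map g)
    (g₂ := MTensor.map g) (b₂ := MTensor.lmap F.ε) (MTensor.lmap_exact hF.exact0 hF.surj) hY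
    (MTensor.lmap_exact hF.exact0 hF.surj).apply_apply_eq_zero (hF.lmap_d_lmap_d 0)
    (fun _ => (MTensor.lmap_map _ _ _).symm) (fun _ => (MTensor.lmap_map _ _ _).symm)
    (fun _ => (MTensor.lmap_map _ _ _).symm) (fun _ => (MTensor.lmap_map _ _ _).symm)
    (MTensor.map_exact hfg hg).apply_apply_eq_zero (MTensor.map_surjective hg)
    (MTensor.map_exact hfg hg) hT

theorem map_injective_of_torVanishAt (hZ : F.TorVanishAt Z 0) :
    Injective (MTensor.map (T := T) f) := by
  have hex : Exact (MTensor.lmap (N := X) (F.d 0))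
      ((MTensor.map (T := T) f).comp (MTensor.lmap F.ε)) :=
    exact_first_column (f₁ := MTensor.map f) (f₂ := MTensor.map f)
      (f₃ := AddMonoidHom.id _) (g₀ := MTensor.map g) (g₁ := MTensor.map g)
      (g₂ := MTensor.map g) (b₀ := MTensor.lmap (F.d 1))
      (MTensor.lmap_exact hF.exact0 hF.surj) (hF.lmap_d_lmap_d 0) hZ
      (fun x => by
        rw [AddMonoidHom.comp_apply,
          (MTensor.lmap_exact hF.exact0 hF.surj).apply_apply_eq_zero, map_zero])
      (fun _ => (MTensor.lmap_map _ _ _).symm) (fun _ => (MTensor.lmap_map _ _ _).symm)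
      (fun _ => (MTensor.lmap_map _ _ _).symm) (fun _ => (MTensor.lmap_map _ _ _).symm)
      (MTensor.map_surjective hg) (MTensor.map_exact hfg hg) (hF.flat 0 _ _ _ hf)
      (MTensor.map_exact hfg hg).apply_apply_eq_zero
  refine (injective_iff_map_eq_zero _).2 fun x hx => ?_
  obtain ⟨y, rfl⟩ := MTensor.lmap_surjective (N := X) hF.surj x
  obtain ⟨z, rfl⟩ := (hex y).1 hx
  exact (MTensor.lmap_exact hF.exact0 hF.surj).apply_apply_eq_zero z

end ResolutionData.IsProjResolution

/-- The iterated syzygies of `N` in the canonical free resolution. -/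
def freeSyzygy (A : Type u) [Ring A] (N : Type u) [AddCommGroup N] [Module A N] :
    ℕ → ModuleCat.{u} A
  | 0 => ModuleCat.of A N
  | n + 1 => ModuleCat.of A
      (LinearMap.ker (Finsupp.linearCombination A (id : freeSyzygy A N n → freeSyzygy A N n)))

/-- The canonical surjection of a free module onto the `n`-th syzygy. -/
def freeCover (A : Type u) [Ring A] (N : Type u) [AddCommGroup N] [Module A N] (n : ℕ) :
    (freeSyzygy A N n →₀ A) →ₗ[A] freeSyzygy A N n :=
  Finsupp.linearCombination A id

/-- The inclusion of a syzygy in the free module covering the previous one. -/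
def freeSyzygyIncl (A : Type u) [Ring A] (N : Type u) [AddCommGroup N] [Module A N] (n : ℕ) :
    freeSyzygy A N (n + 1) →ₗ[A] (freeSyzygy A N n →₀ A) :=
  (LinearMap.ker (Finsupp.linearCombination A (id : freeSyzygy A N n → _))).subtype

section FreeResolution

variable (A : Type u) [Ring A] (N : Type u) [AddCommGroup N] [Module A N] (n : ℕ)

theorem freeCover_surjective : Surjective (freeCover A N n) :=
  Finsupp.linearCombination_id_surjective A _

theorem freeSyzygyIncl_injective : Injective (freeSyzygyIncl A N n) :=
  Subtype.val_injective

theorem freeSyzygyIncl_exact : Exact (freeSyzygyIncl A N n) (freeCover A N n) :=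
  LinearMap.exact_subtype_ker_map _

/-- The differentials of the canonical free resolution. -/
def freeD : (freeSyzygy A N (n + 1) →₀ A) →ₗ[A] (freeSyzygy A N n →₀ A) :=
  (freeSyzygyIncl A N n).comp (freeCover A N (n + 1))

theorem freeD_exact_freeCover : Exact (freeD A N n) (freeCover A N n) :=
  ((freeCover_surjective A N (n + 1)).comp_exact_iff_exact
    (f := freeSyzygyIncl A N n) (g := freeCover A N n)).2 (freeSyzygyIncl_exact A N n)

theorem freeD_exact_freeD : Exact (freeD A N (n + 1)) (freeD A N n) := fun x => by
  rw [← freeD_exact_freeCover A N (n + 1) x, freeD, LinearMap.comp_apply,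
    map_eq_zero_iff _ (freeSyzygyIncl_injective A N n)]

/-- The canonical free resolution of a module. -/
def freeResolution : ResolutionData A N where
  P n := freeSyzygy A N n →₀ A
  d n := freeD A N n
  ε := freeCover A N 0

theorem freeResolution_isProjResolution : (freeResolution A N).IsProjResolution where
  proj n := inferInstanceAs (Module.Projective A (freeSyzygy A N n →₀ A))
  surj := freeCover_surjective A N 0
  exact0 := freeD_exact_freeCover A N 0
  exactSucc := freeD_exact_freeD A N

end FreeResolution

/-- Balancing: if the complex `N ⊗_S F` is exact in positive degrees for a projective resolution
`F` of `T`, then `Tor^S_i(N, T) = 0` for all `i ≥ 1`. -/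
theorem torVanishAll_of_torVanishAt {F : ResolutionData S T} (hF : F.IsProjResolution)
    {N : Type u} [AddCommGroup N] [Module Sᵐᵒᵖ N] (hN : ∀ j, F.TorVanishAt N j) :
    TorVanishAll S N T := by
  have hflat (n : ℕ) : IsFlatRightModule S (freeSyzygy Sᵐᵒᵖ N n →₀ Sᵐᵒᵖ) := .of_projective _
  have hsyz : ∀ n j, F.TorVanishAt (freeSyzygy Sᵐᵒᵖ N n) j := by
    intro n
    induction n with
    | zero => exact hN
    | succ n ih =>
      exact fun j => hF.torVanishAt_first (freeSyzygyIncl_injective Sᵐᵒᵖ N n)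
        (freeSyzygyIncl_exact Sᵐᵒᵖ N n) (freeCover_surjective Sᵐᵒᵖ N n)
        ((hflat n).torVanishAt hF j) (ih (j + 1))
  have hmap (j : ℕ) : Exact (MTensor.map (T := T) (freeD Sᵐᵒᵖ N (j + 1)))
      (MTensor.map (freeD Sᵐᵒᵖ N j)) := fun x => by
    have hinj := hF.map_injective_of_torVanishAt (freeSyzygyIncl_injective Sᵐᵒᵖ N j)
      (freeSyzygyIncl_exact Sᵐᵒᵖ N j) (freeCover_surjective Sᵐᵒᵖ N j) (hsyz j 0)
    rw [← MTensor.map_exact (freeD_exact_freeCover Sᵐᵒᵖ N (j + 1))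
      (freeCover_surjective Sᵐᵒᵖ N (j + 1)) x, ← map_eq_zero_iff _ hinj, MTensor.map_map]
    rfl
  exact ⟨freeResolution Sᵐᵒᵖ N, freeResolution_isProjResolution Sᵐᵒᵖ N, hmap⟩

end Tor

section HomTensor

variable {S R : Type u} [Ring S] [Ring R]
variable {T : Type u} [AddCommGroup T] [Module S T] [Module Rᵐᵒᵖ T] [SMulCommClass S Rᵐᵒᵖ T]

namespace MTensor

section MapR

variable (R T)
variable {N N' : Type u} [AddCommGroup N] [Module Sᵐᵒᵖ N] [AddCommGroup N'] [Module Sᵐᵒᵖ N']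

/-- `MTensor.map` as a map of right `R`-modules. -/
def mapR (g : N →ₗ[Sᵐᵒᵖ] N') : MTensor S N T →ₗ[Rᵐᵒᵖ] MTensor S N' T where
  toFun := map g
  map_add' := map_add _
  map_smul' ρ x := by
    induction x using induction_on with
    | zero => simp
    | mk n t => simp [smul_mk]
    | add x y hx hy => simp_all

theorem mapR_comp_theta (g : N →ₗ[Sᵐᵒᵖ] N') (n : N) :
    (mapR R T g).comp (theta R n : T →ₗ[Rᵐᵒᵖ] MTensor S N T) = theta R (g n) := rfl

variable (S N) in
/-- The map `θ_N` as a homomorphism. -/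
def thetaHom : N →+ (T →ₗ[Rᵐᵒᵖ] MTensor S N T) :=
  AddMonoidHom.mk' (theta R) fun n n' => LinearMap.ext fun t => mk_add_left n n' t

@[simp] theorem thetaHom_apply (n : N) : thetaHom S R T N n = theta R n := rfl

end MapR

variable [SMulCommClass Rᵐᵒᵖ S T]
variable (F : Type u) [AddCommGroup F] [Module Sᵐᵒᵖ F]
variable (P : Type u) [AddCommGroup P] [Module Rᵐᵒᵖ P]

variable (R T) in
/-- The tensor evaluation map `F ⊗_S Hom_R(P, T) → Hom_R(P, F ⊗_S T)`. -/
def tau : MTensor S F (P →ₗ[Rᵐᵒᵖ] T) →+ (P →ₗ[Rᵐᵒᵖ] MTensor S F T) :=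
  lift (AddMonoidHom.mk'
    (fun f => AddMonoidHom.mk' (fun h => (theta R f).comp h) fun h h' =>
      LinearMap.comp_add h h' _)
    fun f f' => AddMonoidHom.ext fun h => LinearMap.ext fun p => mk_add_left f f' (h p))
    fun s f h => LinearMap.ext fun p => mk_smul s f (h p)

variable {F P}

@[simp] theorem tau_mk (f : F) (h : P →ₗ[Rᵐᵒᵖ] T) :
    tau R T F P (mk f h : MTensor S F (P →ₗ[Rᵐᵒᵖ] T)) = (theta R f).comp h := rfl

variable (S T) in
/-- Precomposition as a map of left `S`-modules. -/
def preCompS {P' : Type u} [AddCommGroup P'] [Module Rᵐᵒᵖ P'] (d : P →ₗ[Rᵐᵒᵖ] P') :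
    (P' →ₗ[Rᵐᵒᵖ] T) →ₗ[S] (P →ₗ[Rᵐᵒᵖ] T) where
  toFun h := h.comp d
  map_add' h h' := LinearMap.add_comp d h' h
  map_smul' _ _ := rfl

theorem tau_lmap_preCompS {P' : Type u} [AddCommGroup P'] [Module Rᵐᵒᵖ P'] (d : P →ₗ[Rᵐᵒᵖ] P')
    (x : MTensor S F (P' →ₗ[Rᵐᵒᵖ] T)) :
    tau R T F P (lmap (preCompS S T d) x) = (tau R T F P' x).comp d := by
  induction x using induction_on with
  | zero => simp
  | mk n t => rfl
  | add x y hx hy => simp only [map_add, hx, hy, LinearMap.add_comp]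

variable (S T) in
/-- The map `t ↦ (p ↦ u p • t)` attached to a linear functional `u`. -/
def functionalSMul (u : P →ₗ[Rᵐᵒᵖ] Rᵐᵒᵖ) : T →ₗ[S] (P →ₗ[Rᵐᵒᵖ] T) where
  toFun t := u.smulRight t
  map_add' t t' := by ext; simp
  map_smul' s t := LinearMap.ext fun p => smul_comm (u p) s t

theorem tau_lmap_functionalSMul (u : P →ₗ[Rᵐᵒᵖ] Rᵐᵒᵖ) (x : MTensor S F T) :
    tau R T F P (lmap (functionalSMul S T u) x) = u.smulRight x := by
  induction x using induction_on with
  | zero => ext; simp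
  | mk n t => ext p; exact (smul_mk R (u p) n t).symm
  | add x y hx hy => ext p; simp [hx, hy]

theorem tau_bijective [Module.Finite Rᵐᵒᵖ P] [Module.Projective Rᵐᵒᵖ P] :
    Bijective (tau (S := S) R T F P) := by
  obtain ⟨n, f, g, -, -, hfg⟩ := Module.Finite.exists_comp_eq_id_of_projective Rᵐᵒᵖ P
  let u (i : Fin n) : P →ₗ[Rᵐᵒᵖ] Rᵐᵒᵖ := (LinearMap.proj i).comp g
  let e (i : Fin n) : P := f (Pi.single i 1)
  have hu (p : P) : ∑ i, u i p • e i = p := by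
    conv_rhs => rw [← LinearMap.id_apply (R := Rᵐᵒᵖ) p, ← hfg, LinearMap.comp_apply,
      f.pi_apply_eq_sum_univ]
    refine Finset.sum_congr rfl fun i _ => ?_
    simp only [u, e, LinearMap.comp_apply, LinearMap.proj_apply]
    congr 2
    ext j
    simp [Pi.single_apply, eq_comm]
  have hsum {Y : Type u} [AddCommGroup Y] [Module Rᵐᵒᵖ Y] (α : P →ₗ[Rᵐᵒᵖ] Y) :
      ∑ i, (u i).smulRight (α (e i)) = α := by
    ext p
    conv_rhs => rw [← hu p]
    simp
  let inv : (P →ₗ[Rᵐᵒᵖ] MTensor S F T) → MTensor S F (P →ₗ[Rᵐᵒᵖ] T) :=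
    fun α => ∑ i, lmap (functionalSMul S T (u i)) (α (e i))
  refine bijective_iff_has_inverse.2 ⟨inv, fun x => ?_, fun α => ?_⟩
  · induction x using induction_on with
    | zero => simp [inv]
    | mk f h =>
      change ∑ i, mk f ((u i).smulRight (h (e i))) = mk f h
      rw [← mk_sum_right, hsum]
    | add x y hx hy =>
      simp only [inv, map_add, LinearMap.add_apply, Finset.sum_add_distrib] at hx hy ⊢
      rw [hx, hy]
  · simp only [inv, map_sum, tau_lmap_functionalSMul]
    exact hsum α

end MTensor

variable [SMulCommClass Rᵐᵒᵖ S T]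

theorem IsFlatRightModule.extVanishAt {F : Type u} [AddCommGroup F] [Module Sᵐᵒᵖ F]
    (hF : IsFlatRightModule S F) {Q : ResolutionData Rᵐᵒᵖ T} (hQ : Q.IsProjResolution)
    (hfin : ∀ n, Module.Finite Rᵐᵒᵖ (Q.P n)) {j : ℕ} (hj : Q.ExtVanishAt T j) :
    Q.ExtVanishAt (MTensor S F T) j := by
  have := hQ.proj
  have hex := hF.lmap_exact (f := MTensor.preCompS S T (Q.d j))
    (g := MTensor.preCompS S T (Q.d (j + 1))) hj
  intro α
  obtain ⟨x, rfl⟩ := MTensor.tau_bijective.2 α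
  simp only [preComp_apply, ← MTensor.tau_lmap_preCompS, Set.mem_range]
  rw [map_eq_zero_iff _ MTensor.tau_bijective.1, hex x]
  constructor
  · rintro ⟨y, rfl⟩
    exact ⟨MTensor.tau R T F _ y, (MTensor.tau_lmap_preCompS _ y).symm⟩
  · rintro ⟨β, hβ⟩
    obtain ⟨y, rfl⟩ := MTensor.tau_bijective.2 β
    exact ⟨y, MTensor.tau_bijective.1 ((MTensor.tau_lmap_preCompS _ y).trans hβ)⟩

theorem MTensor.exists_eq_mk_one {F : Type u} [AddCommGroup F] [Module Sᵐᵒᵖ F]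
    (x : MTensor S F S) : ∃ f, x = mk f 1 := by
  induction x using induction_on with
  | zero => exact ⟨0, (mk_zero_left _).symm⟩
  | mk f s => exact ⟨op s • f, by rw [← mk_smul, smul_eq_mul, mul_one]⟩
  | add x y hx hy =>
    obtain ⟨f, rfl⟩ := hx
    obtain ⟨g, rfl⟩ := hy
    exact ⟨f + g, (mk_add_left _ _ _).symm⟩

theorem MTensor.eq_zero_of_mk_one {F : Type u} [AddCommGroup F] [Module Sᵐᵒᵖ F] {f : F}
    (hf : (mk f 1 : MTensor S F S) = 0) : f = 0 := by
  let act : MTensor S F S →+ F := lift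
    (AddMonoidHom.mk' (fun f => AddMonoidHom.mk' (fun s => op s • f) fun s s' => by
      rw [op_add, add_smul]) fun f f' => AddMonoidHom.ext fun s => smul_add _ _ _)
    fun s f s' => by simp [mul_smul]
  simpa [act] using congrArg act hf

theorem IsFlatRightModule.theta_bijective {F : Type u} [AddCommGroup F] [Module Sᵐᵒᵖ F]
    (hF : IsFlatRightModule S F) (hS : Bijective (leftHomothety S R T))
    {Q : ResolutionData Rᵐᵒᵖ T} (hQ : Q.IsProjResolution)
    (hfin : ∀ n, Module.Finite Rᵐᵒᵖ (Q.P n)) :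
    Bijective (MTensor.thetaHom S R T F) := by
  have := hQ.proj
  let c : S →ₗ[S] (Q.P 0 →ₗ[Rᵐᵒᵖ] T) := LinearMap.toSpanSingleton S _ Q.ε
  have hc (s : S) : c s = preComp Q.ε T (leftHomothety S R T s) := rfl
  have hinj : Injective c := fun s s' h =>
    hS.1 (preComp_injective hQ.surj (by rw [← hc, ← hc, h]))
  have hex : Exact c (MTensor.preCompS S T (Q.d 0)) := fun h => by
    refine (preComp_exact (Y := T) hQ.exact0 hQ.surj h).trans ⟨?_, ?_⟩
    · rintro ⟨k, rfl⟩
      obtain ⟨s, rfl⟩ := hS.2 k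
      exact ⟨s, rfl⟩
    · rintro ⟨s, rfl⟩
      exact ⟨_, (hc s).symm⟩
  have htau (f : F) : MTensor.tau R T F _ (MTensor.lmap c (MTensor.mk f 1)) =
      preComp Q.ε _ (MTensor.theta R f) := by
    rw [MTensor.lmap_mk, MTensor.tau_mk, show c 1 = Q.ε from one_smul _ _, preComp_apply]
  refine ⟨(injective_iff_map_eq_zero _).2 fun f hf => ?_, fun α => ?_⟩
  · have h0 : MTensor.tau R T F _ (MTensor.lmap c (MTensor.mk f 1)) = 0 := by
      rw [htau, ← MTensor.thetaHom_apply, hf, map_zero]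
    rw [map_eq_zero_iff _ MTensor.tau_bijective.1, map_eq_zero_iff _ (hF _ _ c hinj)] at h0
    exact MTensor.eq_zero_of_mk_one h0
  · obtain ⟨x, hx⟩ := MTensor.tau_bijective.2 (α.comp Q.ε)
    have hx0 : MTensor.lmap (MTensor.preCompS S T (Q.d 0)) x = 0 := by
      rw [← map_eq_zero_iff _ (MTensor.tau_bijective (S := S) (T := T) (F := F)).1,
        MTensor.tau_lmap_preCompS, hx, LinearMap.comp_assoc, hQ.ε_comp_d, LinearMap.comp_zero]
    obtain ⟨y, rfl⟩ := (hF.lmap_exact hex x).1 hx0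
    obtain ⟨f, rfl⟩ := MTensor.exists_eq_mk_one y
    exact ⟨f, preComp_injective hQ.surj ((htau f).symm.trans hx)⟩

end HomTensor

section Faithful

/-- The left module structure on the character module of a right module. -/
abbrev characterLeftModule (R X : Type u) [Ring R] [AddCommGroup X] [Module Rᵐᵒᵖ X] :
    Module R (CharacterModule X) where
  smul r c := c.comp (DistribSMul.toAddMonoidHom X (op r))
  one_smul c := AddMonoidHom.ext fun x => congrArg c (one_smul Rᵐᵒᵖ x)
  mul_smul r r' c := AddMonoidHom.ext fun x => congrArg c (mul_smul (op r') (op r) x)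
  smul_zero _ := rfl
  smul_add _ _ _ := rfl
  add_smul r r' c := AddMonoidHom.ext fun x =>
    (congrArg c (add_smul (op r) (op r') x)).trans (map_add c _ _)
  zero_smul c := AddMonoidHom.ext fun x => (congrArg c (zero_smul Rᵐᵒᵖ x)).trans (map_zero c)

variable {R : Type u} [Ring R] {T : Type u} [AddCommGroup T] [Module Rᵐᵒᵖ T]

theorem HasFGProjResolution.finitePresentation {A : Type u} [Ring A] {X : Type u}
    [AddCommGroup X] [Module A X] (h : HasFGProjResolution A X) :
    Module.FinitePresentation A X := by
  obtain ⟨Q, hQ, hfin⟩ := h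
  have := hQ.proj
  have := Module.finitePresentation_of_projective A (Q.P 0)
  refine Module.finitePresentation_of_surjective Q.ε hQ.surj ?_
  rw [LinearMap.exact_iff.1 hQ.exact0]
  exact (LinearMap.range_eq_map (Q.d 0)) ▸ (Module.Finite.fg_top).map _

/-- For finitely presented `T`, if `T ⊗_R M = 0` implies `M = 0` then `Hom_R(T, X) = 0` implies
`X = 0`. -/
theorem subsingleton_of_forall_hom_eq_zero [Module.FinitePresentation Rᵐᵒᵖ T]
    (hT : ∀ (M : Type u) [AddCommGroup M] [Module R M],
      Subsingleton (MTensor R T M) → Subsingleton M)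
    (X : Type u) [AddCommGroup X] [Module Rᵐᵒᵖ X] (hX : ∀ φ : T →ₗ[Rᵐᵒᵖ] X, φ = 0) :
    Subsingleton X := by
  obtain ⟨n, m, f, g, hf, hfg⟩ := Module.FinitePresentation.exists_fin' Rᵐᵒᵖ T
  have hsum (x : Fin n → Rᵐᵒᵖ) : ∑ i, x i • (Pi.single i 1 : Fin n → Rᵐᵒᵖ) = x := by
    ext j
    simp [Pi.single_apply]
  let G (j : Fin m) (i : Fin n) : Rᵐᵒᵖ := g (Pi.single j 1) i
  let t (i : Fin n) : T := f (Pi.single i 1)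
  let Φ : (Fin n → X) →+ (Fin m → X) := AddMonoidHom.mk' (fun x j => ∑ i, G j i • x i)
    fun x y => by ext j; simp [Finset.sum_add_distrib]
  have hΦ : Injective Φ := by
    refine (injective_iff_map_eq_zero _).2 fun x hx => ?_
    let h : (Fin n → Rᵐᵒᵖ) →ₗ[Rᵐᵒᵖ] X := Fintype.linearCombination Rᵐᵒᵖ x
    have hg : h.comp g = 0 := by
      refine LinearMap.pi_ext' fun j => LinearMap.ext_ring ?_
      simpa [h, Fintype.linearCombination_apply, Φ, G] using congrFun hx j
    obtain ⟨φ, hφ⟩ := (preComp_exact (Y := X) hfg hf h).1 hg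
    ext i
    rw [hX φ, map_zero] at hφ
    simpa [h, Fintype.linearCombination_apply, Pi.single_apply] using
      (LinearMap.congr_fun hφ (Pi.single i 1)).symm
  let := characterLeftModule R X
  have htens (i : Fin n) (c : CharacterModule X) :
      (MTensor.mk (t i) c : MTensor R T (CharacterModule X)) = 0 := by
    obtain ⟨d, hd⟩ := (Module.Baer.of_divisible _).extension_property_addMonoidHom Φ hΦ
      (c.comp (Pi.evalAddMonoidHom _ i))
    let e (j : Fin m) : CharacterModule X := d.comp (AddMonoidHom.single (fun _ => X) j)
    have hc (k : Fin n) : ∑ j, (unop (G j k)) • e j = if k = i then c else 0 := by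
      refine AddMonoidHom.ext fun x => ?_
      have hx : ∑ j, Pi.single j (G j k • x) = Φ (Pi.single k x) := by
        ext j
        simp [Φ, Pi.single_apply, Finset.sum_apply]
      refine (AddMonoidHom.finsetSum_apply (M := X) (N := AddCircle (1 : ℚ))
        (fun j => unop (G j k) • e j) Finset.univ x).trans ?_
      change ∑ j, d (Pi.single j (G j k • x)) = _
      rw [← map_sum, hx, ← AddMonoidHom.comp_apply, hd]
      change c ((Pi.single k x : Fin n → X) i) = _
      by_cases hk : k = i
      · subst hk; simp; rfl
      · simp [hk, Ne.symm hk]; rfl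
    have h1 : (MTensor.mk (t i) c : MTensor R T (CharacterModule X)) =
        ∑ k, MTensor.mk (t k) (if k = i then c else 0) := by
      rw [Finset.sum_eq_single i] <;> simp +contextual
    have h2 (j : Fin m) : ∑ k, G j k • t k = 0 := by
      have := hfg.apply_apply_eq_zero (Pi.single j 1)
      rw [← hsum (g _), map_sum] at this
      simpa using this
    rw [h1]
    simp only [← hc, MTensor.mk_sum_right, MTensor.mk_smul, op_unop]
    rw [Finset.sum_comm]
    simp only [← MTensor.mk_sum_left, h2, MTensor.mk_zero_left, Finset.sum_const_zero]
  have hM : Subsingleton (MTensor R T (CharacterModule X)) := by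
    refine ⟨fun x y => ?_⟩
    have hz (x : MTensor R T (CharacterModule X)) : x = 0 := by
      induction x using MTensor.induction_on with
      | zero => rfl
      | mk s c =>
        obtain ⟨a, rfl⟩ := hf s
        rw [← hsum a, map_sum, MTensor.mk_sum_left]
        refine Finset.sum_eq_zero fun i _ => ?_
        rw [map_smul, ← op_unop (a i), ← MTensor.mk_smul]
        exact htens i _
      | add x y hx hy => rw [hx, hy, add_zero]
    rw [hz x, hz y]
  have := hT _ hM
  have h0 (x : X) : x = 0 := CharacterModule.eq_zero_of_character_apply fun c => by
    rw [Subsingleton.elim c 0]; rfl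
  exact ⟨fun x y => by rw [h0 x, h0 y]⟩

end Faithful

theorem ZComplex.IsExact.exists_eq_d {A : Type u} [Ring A] {C : ZComplex A} (hC : C.IsExact)
    (i : ℤ) (x : LinearMap.ker (C.d (i + 1))) : ∃ y, C.d i y = x :=
  (hC i x).1 x.2

/-- The map `C_i → ker d_{i+1}` induced by `d_i` in an exact complex. -/
def ZComplex.IsExact.toKer {A : Type u} [Ring A] {C : ZComplex A} (hC : C.IsExact) (i : ℤ) :
    C.P i →ₗ[A] LinearMap.ker (C.d (i + 1)) :=
  (C.d i).codRestrict _ fun x => (hC i).apply_apply_eq_zero x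

section ToKer

variable {A : Type u} [Ring A] {C : ZComplex A} (hC : C.IsExact) (i : ℤ)

theorem ZComplex.IsExact.toKer_surjective : Surjective (hC.toKer i) := fun x => by
  obtain ⟨y, hy⟩ := hC.exists_eq_d i x
  exact ⟨y, Subtype.ext hy⟩

theorem ZComplex.IsExact.subtype_exact_toKer :
    Exact (LinearMap.ker (C.d i)).subtype (hC.toKer i) := fun x => by
  refine ⟨fun hx => ⟨⟨x, congrArg Subtype.val hx⟩, rfl⟩, ?_⟩
  rintro ⟨y, rfl⟩
  exact Subtype.ext y.2

end ToKer

section Good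

variable {S R : Type u} [Ring S] [Ring R]
variable {T : Type u} [AddCommGroup T] [Module S T] [Module Rᵐᵒᵖ T] [SMulCommClass S Rᵐᵒᵖ T]

/-- Membership of `N` in the Auslander class, computed by fixed resolutions `F` of `_S T` and `Q`
of `T_R`. -/
structure IsAuslanderFor (F : ResolutionData S T) (Q : ResolutionData Rᵐᵒᵖ T) (N : Type u)
    [AddCommGroup N] [Module Sᵐᵒᵖ N] : Prop where
  tor : ∀ j, F.TorVanishAt N j
  ext : ∀ j, Q.ExtVanishAt (MTensor S N T) j
  theta : Bijective (MTensor.thetaHom S R T N)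

variable {F : ResolutionData S T} (hF : F.IsProjResolution)
variable {Q : ResolutionData Rᵐᵒᵖ T} (hQ : Q.IsProjResolution)

include hF in
theorem IsFlatRightModule.isAuslanderFor (hfin : ∀ n, Module.Finite Rᵐᵒᵖ (Q.P n))
    (hS : Bijective (leftHomothety S R T)) (hQT : ∀ j, Q.ExtVanishAt T j) {N : Type u}
    [AddCommGroup N] [Module Sᵐᵒᵖ N] (hN : IsFlatRightModule S N) (hQ : Q.IsProjResolution) :
    IsAuslanderFor F Q N :=
  have := SMulCommClass.symm S Rᵐᵒᵖ T
  ⟨hN.torVanishAt hF, fun j => hN.extVanishAt hQ hfin (hQT j), hN.theta_bijective hS hQ hfin⟩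

section ShortExact

variable {K G N : Type u} [AddCommGroup K] [Module Sᵐᵒᵖ K] [AddCommGroup G] [Module Sᵐᵒᵖ G]
  [AddCommGroup N] [Module Sᵐᵒᵖ N] {f : K →ₗ[Sᵐᵒᵖ] G} {g : G →ₗ[Sᵐᵒᵖ] N}

theorem map_injective_of_isAuslanderFor
    (hT : ∀ (X : Type u) [AddCommGroup X] [Module Rᵐᵒᵖ X],
      (∀ φ : T →ₗ[Rᵐᵒᵖ] X, φ = 0) → Subsingleton X)
    (hK : IsAuslanderFor F Q K) (hG : IsAuslanderFor F Q G) (hf : Injective f) :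
    Injective (MTensor.map (T := T) f) := by
  have hker : Subsingleton (LinearMap.ker (MTensor.mapR R T f)) := by
    refine hT _ fun φ => ?_
    obtain ⟨k, hk⟩ := hK.theta.2 ((LinearMap.ker (MTensor.mapR R T f)).subtype.comp φ)
    have hfk : MTensor.thetaHom S R T G (f k) = 0 := by
      rw [MTensor.thetaHom_apply, ← MTensor.mapR_comp_theta, ← MTensor.thetaHom_apply, hk]
      exact LinearMap.ext fun t => (φ t).2
    rw [map_eq_zero_iff _ hG.theta.1, map_eq_zero_iff _ hf] at hfk
    rw [hfk, map_zero] at hk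
    exact LinearMap.ext fun t => Subtype.ext (LinearMap.congr_fun hk t).symm
  exact LinearMap.ker_eq_bot.1 (Submodule.subsingleton_iff_eq_bot.1 hker)

include hF hQ in
theorem IsAuslanderFor.third
    (hT : ∀ (X : Type u) [AddCommGroup X] [Module Rᵐᵒᵖ X],
      (∀ φ : T →ₗ[Rᵐᵒᵖ] X, φ = 0) → Subsingleton X)
    (hK : IsAuslanderFor F Q K) (hG : IsAuslanderFor F Q G) (hf : Injective f)
    (hfg : Exact f g) (hg : Surjective g) : IsAuslanderFor F Q N := by
  have hinj : Injective (MTensor.mapR R T f) := map_injective_of_isAuslanderFor hT hK hG hf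
  have hex : Exact (MTensor.mapR R T f) (MTensor.mapR R T g) := MTensor.map_exact hfg hg
  have hsurj : Surjective (MTensor.mapR R T g) := MTensor.map_surjective hg
  refine ⟨fun j => ?_, fun j => hQ.extVanishAt_third hinj hex hsurj (hG.ext j) (hK.ext (j + 1)),
    (injective_iff_map_eq_zero _).2 fun n hn => ?_, fun β => ?_⟩
  · cases j with
    | zero => exact hF.torVanishAt_zero_third hfg hg (hG.tor 0) hinj
    | succ j => exact hF.torVanishAt_third hf hfg hg (hG.tor (j + 1)) (hK.tor j)
  · obtain ⟨y, rfl⟩ := hg n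
    obtain ⟨α, hα⟩ := (postComp_exact hinj hex (MTensor.thetaHom S R T G y)).1 hn
    obtain ⟨k, rfl⟩ := hK.theta.2 α
    rw [← hG.theta.1 (a₁ := f k) hα]
    exact hfg.apply_apply_eq_zero k
  · obtain ⟨γ, rfl⟩ := hQ.postComp_surjective hinj hex hsurj (hK.ext 0) β
    obtain ⟨y, rfl⟩ := hG.theta.2 γ
    exact ⟨g y, rfl⟩

end ShortExact

section Complex

variable {C : ZComplex Sᵐᵒᵖ} (hC : C.IsExact)
  (hCT : ∀ i, Exact (MTensor.map (T := T) (C.d i)) (MTensor.map (T := T) (C.d (i + 1))))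
include hC hCT

theorem ZComplex.IsExact.map_subtype_injective (i : ℤ) :
    Injective (MTensor.map (T := T) (LinearMap.ker (C.d i)).subtype) := by
  obtain ⟨k, rfl⟩ : ∃ k, i = k + 1 + 1 := ⟨i - 1 - 1, by ring⟩
  refine (injective_iff_map_eq_zero _).2 fun x hx => ?_
  obtain ⟨y, rfl⟩ := MTensor.map_surjective (T := T) (hC.toKer_surjective (k + 1)) x
  rw [MTensor.map_map] at hx
  obtain ⟨z, rfl⟩ := (hCT k y).1 hx
  have h0 : (hC.toKer (k + 1)).comp (C.d k) = 0 :=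
    LinearMap.ext fun x => Subtype.ext ((hC k).apply_apply_eq_zero x)
  rw [MTensor.map_map, h0, MTensor.map_zero_apply]

include hF hQ in
theorem ZComplex.IsExact.isAuslanderFor_ker (hA : ∀ i, IsAuslanderFor F Q (C.P i)) (i : ℤ) :
    IsAuslanderFor F Q (LinearMap.ker (C.d i)) := by
  have hmap := hC.map_subtype_injective hCT
  have hι (i : ℤ) : Injective (LinearMap.ker (C.d i)).subtype :=
    (LinearMap.ker (C.d i)).subtype_injective
  have hinj (i : ℤ) : Injective (MTensor.mapR R T (LinearMap.ker (C.d i)).subtype) := hmap i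
  have hex (i : ℤ) : Exact (MTensor.mapR R T (LinearMap.ker (C.d i)).subtype)
      (MTensor.mapR R T (hC.toKer i)) :=
    MTensor.map_exact (hC.subtype_exact_toKer i) (hC.toKer_surjective i)
  have hsurj (i : ℤ) : Surjective (MTensor.mapR R T (hC.toKer i)) :=
    MTensor.map_surjective (hC.toKer_surjective i)
  have htor (j : ℕ) : ∀ i, F.TorVanishAt (LinearMap.ker (C.d i)) j := by
    induction j with
    | zero =>
      intro i
      obtain ⟨k, rfl⟩ : ∃ k, i = k + 1 := ⟨i - 1, by ring⟩
      exact hF.torVanishAt_zero_third (hC.subtype_exact_toKer k) (hC.toKer_surjective k)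
        ((hA k).tor 0) (hmap k)
    | succ j ih =>
      intro i
      obtain ⟨k, rfl⟩ : ∃ k, i = k + 1 := ⟨i - 1, by ring⟩
      exact hF.torVanishAt_third (hι k) (hC.subtype_exact_toKer k) (hC.toKer_surjective k)
        ((hA k).tor (j + 1)) (ih k)
  have hθinj (i : ℤ) : Injective (MTensor.thetaHom S R T (LinearMap.ker (C.d i))) := by
    refine (injective_iff_map_eq_zero _).2 fun x hx => Subtype.ext ?_
    refine (injective_iff_map_eq_zero _).1 (hA i).theta.1 x ?_
    exact congrArg (postComp T (MTensor.mapR R T (LinearMap.ker (C.d i)).subtype)) hx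
  have hθsurj (i : ℤ) : Surjective (MTensor.thetaHom S R T (LinearMap.ker (C.d i))) := by
    intro α
    obtain ⟨c, hc⟩ := (hA i).theta.2 (postComp T (MTensor.mapR R T _) α)
    have hπ : hC.toKer i c = 0 := by
      refine (injective_iff_map_eq_zero _).1 (hθinj (i + 1)) _ ?_
      refine (congrArg (postComp T (MTensor.mapR R T (hC.toKer i))) hc).trans ?_
      exact (postComp_exact (hinj i) (hex i)).apply_apply_eq_zero α
    obtain ⟨k, rfl⟩ := (hC.subtype_exact_toKer i c).1 hπ
    exact ⟨k, postComp_injective (hinj i) hc⟩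
  have hext (j : ℕ) : ∀ i, Q.ExtVanishAt (MTensor S (LinearMap.ker (C.d i)) T) j := by
    induction j with
    | zero =>
      refine fun i => hQ.extVanishAt_zero_first (hinj i) (hex i) ((hA i).ext 0) fun β => ?_
      obtain ⟨x, rfl⟩ := hθsurj (i + 1) β
      obtain ⟨c, rfl⟩ := hC.toKer_surjective i x
      exact ⟨MTensor.thetaHom S R T _ c, rfl⟩
    | succ j ih =>
      exact fun i => hQ.extVanishAt_first (hinj i) (hex i) (hsurj i) ((hA i).ext (j + 1))
        (ih (i + 1))
  exact ⟨fun j => htor j i, fun j => hext j i, hθinj i, hθsurj i⟩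

end Complex

end Good

section FiniteDimension

variable {S : Type u} [Ring S] {C : ZComplex Sᵐᵒᵖ}

theorem MTensor.map_d_map_d (hC : C.IsExact) (T : Type u) [AddCommGroup T] [Module S T] (i : ℤ)
    (x : MTensor S (C.P i) T) : map (C.d (i + 1)) (map (C.d i) x) = 0 := by
  rw [map_map, (hC i).linearMap_comp_eq_zero, map_zero_apply]

variable (hC : C.IsExact) (hflat : ∀ i, IsFlatRightModule S (C.P i))
include hC hflat

/-- An exact complex of flat right modules stays exact after tensoring with a left module of
finite projective dimension. -/
theorem ZComplex.IsExact.map_exact_of_projDim (n : ℕ) : ∀ M : ModuleCat.{u} S,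
    HasClassResolution S (fun P => Module.Projective S P) n M →
      ∀ i, Exact (MTensor.map (T := M) (C.d i)) (MTensor.map (T := M) (C.d (i + 1))) := by
  induction n with
  | zero =>
    intro M hM i
    have : Module.Projective S M := hM
    exact (IsFlatLeftModule.of_projective M).map_exact (hC i)
  | succ n ih =>
    rintro M ⟨e, he, hker⟩ i
    have hP : Module.Projective S e.P := he
    have hex (i : ℤ) := MTensor.lmap_exact (N := C.P i)
      (LinearMap.exact_subtype_ker_map e.f) e.surj
    exact exact_third_column (f₁ := MTensor.lmap (LinearMap.ker e.f).subtype)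
      (f₂ := MTensor.lmap (LinearMap.ker e.f).subtype)
      (f₃ := MTensor.lmap (LinearMap.ker e.f).subtype)
      (g₀ := MTensor.lmap e.f) (g₁ := MTensor.lmap e.f) (g₂ := MTensor.lmap e.f)
      (b₂ := MTensor.map (C.d (i + 1 + 1))) (ih _ hker (i + 1))
      ((IsFlatLeftModule.of_projective e.P).map_exact (hC i))
      (MTensor.map_d_map_d hC _ _) (MTensor.map_d_map_d hC _ _)
      (fun _ => MTensor.lmap_map _ _ _) (fun _ => MTensor.lmap_map _ _ _)
      (fun _ => MTensor.lmap_map _ _ _) (fun _ => MTensor.lmap_map _ _ _)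
      (hex _).apply_apply_eq_zero (MTensor.lmap_surjective e.surj) (hex _)
      (hflat _ _ _ _ (LinearMap.ker e.f).subtype_injective)

/-- An exact complex of flat right modules which stays exact after tensoring with injective left
modules stays exact after tensoring with a left module of finite injective dimension. -/
theorem ZComplex.IsExact.map_exact_of_injDim
    (hI : ∀ (I : Type u) [AddCommGroup I] [Module S I], Module.Injective S I →
      ∀ i, Exact (MTensor.map (T := I) (C.d i)) (MTensor.map (T := I) (C.d (i + 1)))) (n : ℕ) :
    ∀ M : ModuleCat.{u} S, HasClassCoresolution S (fun E => Module.Injective S E) n M →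
      ∀ i, Exact (MTensor.map (T := M) (C.d i)) (MTensor.map (T := M) (C.d (i + 1))) := by
  induction n with
  | zero => exact fun M hM => hI M hM
  | succ n ih =>
    rintro M ⟨m, hm, hcoker⟩ i
    obtain ⟨j, rfl⟩ : ∃ j, i = j + 1 := ⟨i - 1, by ring⟩
    have hex (i : ℤ) := MTensor.lmap_exact (N := C.P i)
      (LinearMap.exact_map_mkQ_range m.f) (LinearMap.range m.f).mkQ_surjective
    exact exact_first_column (f₁ := MTensor.lmap m.f) (f₂ := MTensor.lmap m.f)
      (f₃ := MTensor.lmap m.f) (g₀ := MTensor.lmap (LinearMap.range m.f).mkQ)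
      (g₁ := MTensor.lmap (LinearMap.range m.f).mkQ)
      (g₂ := MTensor.lmap (LinearMap.range m.f).mkQ)
      (b₀ := MTensor.map (C.d j)) (hI m.E hm (j + 1)) (MTensor.map_d_map_d hC _ _)
      (ih _ hcoker j) (MTensor.map_d_map_d hC _ _)
      (fun _ => MTensor.lmap_map _ _ _) (fun _ => MTensor.lmap_map _ _ _)
      (fun _ => MTensor.lmap_map _ _ _) (fun _ => MTensor.lmap_map _ _ _)
      (MTensor.lmap_surjective (LinearMap.range m.f).mkQ_surjective) (hex _)
      (hflat _ _ _ _ m.inj) (hex _).apply_apply_eq_zero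

end FiniteDimension

theorem IsFlatRightModule.punit (S : Type u) [Ring S] : IsFlatRightModule S PUnit.{u + 1} :=
  .of_projective _

/-- Let `T` be a tensorly faithful Wakamatsu tilting `(S,R)`-bimodule and
`N` a right `S`-module of finite Gorenstein flat dimension. If either `pd(_S T) < ∞` or
`id(_S T) < ∞`, then `N ∈ 𝒜_T(S)`. -/
theorem finite_Gfd_mem_auslander
    (S R : Type u) [Ring S] [Ring R]
    (T : Type u) [AddCommGroup T] [Module S T] [Module Rᵐᵒᵖ T] [SMulCommClass S Rᵐᵒᵖ T]
    (hW : IsWakamatsuTilting S R T) (htf : IsTensorlyFaithful S R T)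
    (N : Type u) [AddCommGroup N] [Module Sᵐᵒᵖ N] (hN : ∃ n, GfdLE S N n)
    (hT : (∃ n, ProjDimLE S T n) ∨ (∃ n, InjDimLE S T n)) :
    InAuslanderClass S R T N := by
  obtain ⟨F, hF, -⟩ := hW.fgProjResS
  obtain ⟨Q, hQ, hfin⟩ := hW.fgProjResR
  obtain ⟨Q', hQ', hext⟩ := hW.extR
  have hQT (j : ℕ) : Q.ExtVanishAt T j := hQ'.extVanishAt_congr hQ j T (hext j)
  have := hW.fgProjResR.finitePresentation
  have hfaith := subsingleton_of_forall_hom_eq_zero (T := T) htf.1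
  have hflat {M : Type u} [AddCommGroup M] [Module Sᵐᵒᵖ M] (hM : IsFlatRightModule S M) :
      IsAuslanderFor F Q M := hM.isAuslanderFor hF hfin hW.bijS hQT hQ
  have hGF (M : Type u) [AddCommGroup M] [Module Sᵐᵒᵖ M] (hM : IsGorensteinFlat S M) :
      IsAuslanderFor F Q M := by
    obtain ⟨C, hCflat, hC, hI, ⟨e⟩⟩ := hM
    have hCT : ∀ i, Exact (MTensor.map (T := T) (C.d i)) (MTensor.map (T := T) (C.d (i + 1))) := by
      obtain ⟨n, hn⟩ | ⟨n, hn⟩ := hT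
      · exact hC.map_exact_of_projDim hCflat n _ hn
      · exact hC.map_exact_of_injDim hCflat hI n _ hn
    exact .third hF hQ hfaith (hflat (.punit S))
      (hC.isAuslanderFor_ker hF hQ hCT (fun i => hflat (hCflat i)) 0)
      (f := 0) (g := e.symm.toLinearMap) (fun _ _ _ => rfl)
      (fun x => by simpa using eq_comm) e.symm.surjective
  have hGfd (n : ℕ) : ∀ M : ModuleCat.{u} Sᵐᵒᵖ,
      HasClassResolution Sᵐᵒᵖ (fun P => IsGorensteinFlat S P) n M → IsAuslanderFor F Q M := by
    induction n with
    | zero => exact fun M hM => hGF M hM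
    | succ n ih =>
      rintro M ⟨e, he, hker⟩
      exact .third hF hQ hfaith (ih _ hker) (hGF _ he) (LinearMap.ker e.f).subtype_injective
        (LinearMap.exact_subtype_ker_map e.f) e.surj
  obtain ⟨n, hn⟩ := hN
  have hA := hGfd n _ hn
  exact ⟨torVanishAll_of_torVanishAt hF hA.tor, ⟨Q, hQ, hA.ext⟩, hA.theta⟩
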